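/- arXiv:2412.04200 — 3 statements merged into one kernel-verified Lean document; each statement's English description precedes it below -/
import Mathlib

section
/- Let G be a d-regular simple graph and suppose ψ : E(G) → {0,1,2} is a neighbor-sum-distinguishing edge weighting, i.e., for every edge uv of G the sum of ψ over the edges incident with u differs from the sum of ψ over the edges incident with v. Then taking r = ψ as the red multiplicity function yields a locally irregular 2-edge-coloring of ^2G; in particular lir(^2G) ≤ 2. -/
open scoped Classical

/-- The red degree of a vertex `x`: the sum of the red multiplicities `r e`
over all edges `e` of `G` incident with `x`. -/
noncomputable def redDeg {V : Type*} [Fintype V] [DecidableEq V]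
    (G : SimpleGraph V) (r : Sym2 V → ℕ) (x : V) : ℕ :=
  ∑ e ∈ G.edgeFinset.filter (fun e => x ∈ e), r e

/-- The blue degree of a vertex `x`: the sum of `2 - r e` over all edges `e`
of `G` incident with `x`. -/
noncomputable def blueDeg {V : Type*} [Fintype V] [DecidableEq V]
    (G : SimpleGraph V) (r : Sym2 V → ℕ) (x : V) : ℕ :=
  ∑ e ∈ G.edgeFinset.filter (fun e => x ∈ e), (2 - r e)

/-- `r : E(G) → {0,1,2}` encodes a locally irregular 2-edge-coloring of `²G`:
every edge gets a red multiplicity at most 2, and for every edge `uv`, if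
`r s(u,v) ≥ 1` the red degrees of `u` and `v` differ, and if `r s(u,v) ≤ 1`
the blue degrees of `u` and `v` differ. -/
def IsLIR2 {V : Type*} [Fintype V] [DecidableEq V]
    (G : SimpleGraph V) (r : Sym2 V → ℕ) : Prop :=
  (∀ e ∈ G.edgeSet, r e ≤ 2) ∧
  ∀ u v : V, G.Adj u v →
    (1 ≤ r s(u, v) → redDeg G r u ≠ redDeg G r v) ∧
    (r s(u, v) ≤ 1 → blueDeg G r u ≠ blueDeg G r v)

/-- `lir(²G) ≤ 2`: there is a locally irregular 2-edge-coloring of `²G`. -/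
def LIRtwoLE2 {V : Type*} [Fintype V] [DecidableEq V] (G : SimpleGraph V) : Prop :=
  ∃ r : Sym2 V → ℕ, IsLIR2 G r

/-! In `²G` a vertex `x` has degree `2 * G.degree x`, split into its red and its blue degree. When
adjacent vertices have equal degrees, distinguishing them by red degrees is therefore the same as
distinguishing them by blue degrees, and a neighbor-sum-distinguishing weighting does the former. -/

section

variable {V : Type*} [Fintype V] [DecidableEq V] {G : SimpleGraph V} {r : Sym2 V → ℕ} {u v x : V}

theorem redDeg_add_blueDeg (hr : ∀ e ∈ G.incidenceSet x, r e ≤ 2) :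
    redDeg G r x + blueDeg G r x = 2 * G.degree x := by
  simp only [redDeg, blueDeg, ← G.incidenceFinset_eq_filter]
  calc ∑ e ∈ G.incidenceFinset x, r e + ∑ e ∈ G.incidenceFinset x, (2 - r e)
      = ∑ e ∈ G.incidenceFinset x, (r e + (2 - r e)) := Finset.sum_add_distrib.symm
    _ = ∑ _e ∈ G.incidenceFinset x, 2 :=
        Finset.sum_congr rfl fun e he ↦
          Nat.add_sub_cancel' (hr e ((G.mem_incidenceFinset x e).mp he))
    _ = 2 * G.degree x := by
        rw [Finset.sum_const, G.card_incidenceFinset_eq_degree, smul_eq_mul, mul_comm]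

theorem blueDeg_eq_blueDeg_iff (hu : ∀ e ∈ G.incidenceSet u, r e ≤ 2)
    (hv : ∀ e ∈ G.incidenceSet v, r e ≤ 2) (hdeg : G.degree u = G.degree v) :
    blueDeg G r u = blueDeg G r v ↔ redDeg G r u = redDeg G r v := by
  have hsum : redDeg G r u + blueDeg G r u = redDeg G r v + blueDeg G r v := by
    rw [redDeg_add_blueDeg hu, redDeg_add_blueDeg hv, hdeg]
  omega

theorem isLIR2_of_nsd_general (hdeg : ∀ u v, G.Adj u v → G.degree u = G.degree v)
    (hr : ∀ e ∈ G.edgeSet, r e ≤ 2) (hnsd : ∀ u v, G.Adj u v → redDeg G r u ≠ redDeg G r v) :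
    IsLIR2 G r := by
  have hr' (x : V) : ∀ e ∈ G.incidenceSet x, r e ≤ 2 := fun e he ↦ hr e he.1
  refine ⟨hr, fun u v huv ↦ ⟨fun _ ↦ hnsd u v huv, fun _ ↦ ?_⟩⟩
  exact (blueDeg_eq_blueDeg_iff (hr' u) (hr' v) (hdeg u v huv)).not.mpr (hnsd u v huv)

end

/-- If `G` is a `d`-regular simple graph and `ψ : E(G) → {0,1,2}` is a
neighbor-sum-distinguishing edge weighting (for every edge `uv`, the sum of
`ψ` over edges incident with `u` differs from the sum over edges incident
with `v`), then `r = ψ` is a locally irregular 2-edge-coloring of `²G`;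
in particular `lir(²G) ≤ 2`. -/
theorem isLIR2_of_nsd {V : Type*} [Fintype V] [DecidableEq V]
    (G : SimpleGraph V) (d : ℕ) (hreg : G.IsRegularOfDegree d)
    (ψ : Sym2 V → ℕ) (hψ : ∀ e ∈ G.edgeSet, ψ e ≤ 2)
    (hnsd : ∀ u v : V, G.Adj u v →
      (∑ e ∈ G.edgeFinset.filter (fun e => u ∈ e), ψ e) ≠
      (∑ e ∈ G.edgeFinset.filter (fun e => v ∈ e), ψ e)) :
    IsLIR2 G ψ ∧ LIRtwoLE2 G := by
  have h : IsLIR2 G ψ :=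
    isLIR2_of_nsd_general (fun u v _ ↦ (hreg u).trans (hreg v).symm) hψ hnsd
  exact ⟨h, ψ, h⟩
end

section
/- If G is a connected split graph that is not isomorphic to K2 (the complete graph on two vertices), then lir(^2G) ≤ 2. -/
/-!
Give every vertex an integer weight `w` and color an edge `uv` red, blue, or half and half
according to the sign of `w u + w v`. Replacing `w` by `-w` swaps the two colors, so it is enough
to compare red degrees for `w` and for `-w`, and they are essentially monotone in the weight.

Let `X` be a clique whose complement is independent, and maximal as such. If `X` has at least three
vertices, number them by the ranks `-a, …, b` with `a ≤ b ≤ a + 1`, and let the weights be twice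
the ranks on `X` and `-1` off `X`. Inside `X`, the red degrees increase with the rank: for ranks
`i < j`, some third vertex has its negated rank in `[i, j]` and sends more red copies to the vertex
of rank `j`, and the edges leaving `X`, which are all red at positive ranks and all blue at the
others, do no harm if the ranks are chosen to agree with the numbers of such edges. A vertex off
`X` has smaller red (blue) degree than each neighbor joined to it in red (blue). The only delicate
case is the blue degree of the vertex `q` of rank `0`: choose `q` with the fewest neighbors outside
`X`; if there is just one, maximality of `X` gives a vertex of `X` not adjacent to it, which is put
at a negative rank. If `X` has at most two vertices, `G` is a star or a double star and is colored
directly.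
-/

open scoped Classical

section Degrees

variable {V : Type*} [Fintype V] [DecidableEq V] {G : SimpleGraph V}

lemma sum_incident_edges_eq_sum_neighborFinset (f : Sym2 V → ℕ) (x : V) :
    ∑ e ∈ G.edgeFinset.filter (fun e => x ∈ e), f e = ∑ v ∈ G.neighborFinset x, f s(x, v) := by
  refine (Finset.sum_bij (fun v _ ↦ s(x, v)) (by simp) (fun _ _ _ _ ↦ Sym2.congr_right.mp) ?_
    (fun _ _ ↦ rfl)).symm
  intro e he
  obtain ⟨he, v, rfl⟩ := Finset.mem_filter.mp he
  exact ⟨v, by simpa using he, rfl⟩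

lemma redDeg_eq_sum_neighborFinset (r : Sym2 V → ℕ) (x : V) :
    redDeg G r x = ∑ v ∈ G.neighborFinset x, r s(x, v) :=
  sum_incident_edges_eq_sum_neighborFinset r x

lemma redDeg_const (c : ℕ) (x : V) : redDeg G (fun _ ↦ c) x = c * G.degree x := by
  rw [redDeg_eq_sum_neighborFinset, Finset.sum_const, smul_eq_mul, mul_comm,
    G.card_neighborFinset_eq_degree]

lemma lirTwoLE2_of_isVertexCover_subsingleton {C : Set V} (hC : C.Subsingleton)
    (hcover : G.IsVertexCover C) (hdeg : ∀ u v, G.Adj u v → 2 < G.degree u + G.degree v) :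
    LIRtwoLE2 G := by
  have degree_lt {c v : V} (hc : c ∈ C) (hcv : G.Adj c v) : G.degree v < G.degree c := by
    have hv : v ∉ C := fun hv ↦ hcv.ne (hC hc hv)
    have leaf : G.degree v ≤ 1 := Finset.card_le_one.mpr fun a ha b hb ↦
      hC ((hcover ((G.mem_neighborFinset v a).mp ha)).resolve_left hv)
        ((hcover ((G.mem_neighborFinset v b).mp hb)).resolve_left hv)
    have := hdeg c v hcv
    omega
  have degree_ne {u v : V} (huv : G.Adj u v) : G.degree u ≠ G.degree v :=
    (hcover huv).elim (fun hu ↦ (degree_lt hu huv).ne') (fun hv ↦ (degree_lt hv huv.symm).ne)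
  refine ⟨fun _ ↦ 2, fun _ _ ↦ le_rfl, fun u v huv ↦ ⟨fun _ ↦ ?_, fun h ↦ absurd h (by simp)⟩⟩
  simpa only [redDeg_const, ne_eq, mul_right_inj' two_ne_zero] using degree_ne huv

end Degrees

section Threshold

/-- `1 + sign n`, as a natural number: the red multiplicity given to an edge of total weight `n`
in a threshold coloring. -/
def threshold (n : ℤ) : ℕ :=
  if 0 < n then 2 else if n = 0 then 1 else 0

lemma threshold_mono : Monotone threshold := by
  intro m n h
  unfold threshold
  split_ifs <;> omega

lemma threshold_le_two (n : ℤ) : threshold n ≤ 2 := by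
  unfold threshold
  split_ifs <;> omega

lemma threshold_of_pos {n : ℤ} (h : 0 < n) : threshold n = 2 := if_pos h

lemma threshold_of_neg {n : ℤ} (h : n < 0) : threshold n = 0 := by
  rw [threshold, if_neg h.not_gt, if_neg h.ne]

lemma one_le_threshold_iff {n : ℤ} : 1 ≤ threshold n ↔ 0 ≤ n := by
  unfold threshold
  split_ifs <;> omega

lemma two_sub_threshold (n : ℤ) : 2 - threshold n = threshold (-n) := by
  unfold threshold
  split_ifs <;> omega

lemma threshold_lt_threshold {m n : ℤ} (hmn : m < n) (hm : m ≤ 0) (hn : 0 ≤ n) :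
    threshold m < threshold n := by
  unfold threshold
  split_ifs <;> omega

/-- The threshold coloring given by vertex weights `w`: an edge `uv` is red, one red and one blue,
or blue, according to the sign of `w u + w v`. -/
def thresholdColoring {V : Type*} (w : V → ℤ) : Sym2 V → ℕ :=
  Sym2.lift ⟨fun u v ↦ threshold (w u + w v), fun _ _ ↦ congrArg threshold (add_comm _ _)⟩

@[simp]
lemma thresholdColoring_mk {V : Type*} (w : V → ℤ) (u v : V) :
    thresholdColoring w s(u, v) = threshold (w u + w v) := rfl

lemma two_sub_thresholdColoring {V : Type*} (w : V → ℤ) (e : Sym2 V) :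
    2 - thresholdColoring w e = thresholdColoring (-w) e := by
  induction e using Sym2.ind with
  | _ => simp only [thresholdColoring_mk, two_sub_threshold, Pi.neg_apply, neg_add]

variable {V : Type*} [Fintype V] [DecidableEq V] {G : SimpleGraph V}

/-- The red half of local irregularity: edges with a red copy join vertices of different red
degrees. -/
def IsRedIrregular (G : SimpleGraph V) (r : Sym2 V → ℕ) : Prop :=
  ∀ u v, G.Adj u v → 1 ≤ r s(u, v) → redDeg G r u ≠ redDeg G r v

lemma blueDeg_thresholdColoring (w : V → ℤ) (x : V) :
    blueDeg G (thresholdColoring w) x = redDeg G (thresholdColoring (-w)) x := by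
  simp only [blueDeg, redDeg, two_sub_thresholdColoring]

lemma isLIR2_thresholdColoring {w : V → ℤ} (hred : IsRedIrregular G (thresholdColoring w))
    (hblue : IsRedIrregular G (thresholdColoring (-w))) : IsLIR2 G (thresholdColoring w) := by
  refine ⟨fun e _ ↦ ?_, fun u v huv ↦ ⟨hred u v huv, fun h ↦ ?_⟩⟩
  · induction e using Sym2.ind with
    | _ => exact threshold_le_two _
  · rw [blueDeg_thresholdColoring, blueDeg_thresholdColoring]
    refine hblue u v huv ?_
    rw [← two_sub_thresholdColoring]
    omega

lemma isRedIrregular_of_isVertexCover {X : Set V} {r : Sym2 V → ℕ} (hcover : G.IsVertexCover X)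
    (hin : ∀ u ∈ X, ∀ v ∈ X, G.Adj u v → 1 ≤ r s(u, v) → redDeg G r u ≠ redDeg G r v)
    (hout : ∀ x ∈ X, ∀ y ∉ X, G.Adj x y → 1 ≤ r s(x, y) → redDeg G r y < redDeg G r x) :
    IsRedIrregular G r := by
  intro u v huv hr
  by_cases hu : u ∈ X <;> by_cases hv : v ∈ X
  · exact hin u hu v hv huv hr
  · exact (hout u hu v hv huv hr).ne'
  · exact (hout v hv u hu huv.symm (Sym2.eq_swap ▸ hr)).ne
  · exact ((hcover huv).elim hu hv).elim

end Threshold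

section CliqueCover

variable {V : Type*} [Fintype V] [DecidableEq V] {G : SimpleGraph V} {X : Finset V}
  {w : V → ℤ} {ε : ℤ} {u v x y : V}

/-- The number of neighbors of `x` outside `X`. -/
noncomputable def outDegree (G : SimpleGraph V) (X : Finset V) (x : V) : ℕ :=
  (G.neighborFinset x \ X).card

lemma one_le_outDegree (hy : y ∉ X) (hxy : G.Adj x y) : 1 ≤ outDegree G X x :=
  Finset.card_pos.mpr ⟨y, by simpa using ⟨hxy, hy⟩⟩

lemma neighborFinset_inter_of_isClique (hX : G.IsClique X) (hx : x ∈ X) :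
    G.neighborFinset x ∩ X = X.erase x := by
  ext v
  simp only [Finset.mem_inter, SimpleGraph.mem_neighborFinset, Finset.mem_erase]
  exact ⟨fun h ↦ ⟨h.1.ne', h.2⟩, fun h ↦ ⟨hX hx h.2 h.1.symm, h.2⟩⟩

lemma redDeg_thresholdColoring_of_mem (hX : G.IsClique X) (hw : ∀ y ∉ X, w y = ε) (hx : x ∈ X) :
    redDeg G (thresholdColoring w) x =
      ∑ v ∈ X.erase x, threshold (w v + w x) + outDegree G X x * threshold (w x + ε) := by
  simp only [redDeg_eq_sum_neighborFinset, thresholdColoring_mk]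
  rw [← Finset.sum_inter_add_sum_sdiff (G.neighborFinset x) X,
    neighborFinset_inter_of_isClique hX hx, outDegree, ← smul_eq_mul, ← Finset.sum_const]
  congr 1
  · simp only [add_comm]
  · exact Finset.sum_congr rfl fun v hv ↦ by rw [hw v (Finset.mem_sdiff.mp hv).2]

lemma redDeg_thresholdColoring_of_notMem (hcover : G.IsVertexCover X) (hw : ∀ y ∉ X, w y = ε)
    (hy : y ∉ X) :
    redDeg G (thresholdColoring w) y = ∑ v ∈ X with G.Adj y v, threshold (w v + ε) := by
  simp only [redDeg_eq_sum_neighborFinset, thresholdColoring_mk, hw y hy, add_comm ε]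
  congr 1
  ext v
  simp only [SimpleGraph.mem_neighborFinset, Finset.mem_filter]
  exact ⟨fun h ↦ ⟨(hcover h).resolve_left hy, h⟩, And.right⟩

lemma redDeg_lt_redDeg_of_mem (hX : G.IsClique X) (hw : ∀ y ∉ X, w y = ε) (hu : u ∈ X)
    (hv : v ∈ X) (hne : u ≠ v) (huv : w u ≤ w v)
    (hout : outDegree G X u * threshold (w u + ε) ≤ outDegree G X v * threshold (w v + ε))
    (hstrict : (∃ t ∈ X, t ≠ u ∧ t ≠ v ∧ threshold (w t + w u) < threshold (w t + w v)) ∨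
      outDegree G X u * threshold (w u + ε) < outDegree G X v * threshold (w v + ε)) :
    redDeg G (thresholdColoring w) u < redDeg G (thresholdColoring w) v := by
  rw [redDeg_thresholdColoring_of_mem hX hw hu, redDeg_thresholdColoring_of_mem hX hw hv,
    ← Finset.add_sum_erase _ _ (Finset.mem_erase.mpr ⟨hne, hu⟩),
    ← Finset.add_sum_erase _ _ (Finset.mem_erase.mpr ⟨hne.symm, hv⟩),
    Finset.erase_right_comm (a := u), add_comm (w u) (w v)]
  have hle : ∀ t ∈ (X.erase v).erase u, threshold (w t + w u) ≤ threshold (w t + w v) :=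
    fun t _ ↦ threshold_mono (by omega)
  have hsum := Finset.sum_le_sum hle
  rcases hstrict with ⟨t, ht, htu, htv, hlt⟩ | hlt
  · have hsum_lt := Finset.sum_lt_sum hle ⟨t, by simp [*], hlt⟩
    omega
  · omega

lemma redDeg_lt_redDeg_of_notMem (hX : G.IsClique X) (hcover : G.IsVertexCover X)
    (hw : ∀ y ∉ X, w y = ε) (hx : x ∈ X) (hy : y ∉ X) (hxy : G.Adj x y) (hpos : 0 < w x + ε)
    (hle : ∀ v ∈ X, v ≠ x → threshold (w v + ε) ≤ threshold (w v + w x))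
    (hstrict : (∃ v ∈ X, v ≠ x ∧ threshold (w v + ε) < threshold (w v + w x)) ∨
      2 ≤ outDegree G X x ∨ ∃ s ∈ X, 0 < w s + ε ∧ ¬ G.Adj s y) :
    redDeg G (thresholdColoring w) y < redDeg G (thresholdColoring w) x := by
  have hle' : ∀ v ∈ X.erase x, threshold (w v + ε) ≤ threshold (w v + w x) := fun v hv ↦
    hle v (Finset.mem_of_mem_erase hv) (Finset.ne_of_mem_erase hv)
  have hinner := Finset.sum_le_sum hle'
  have hfilter : ∑ v ∈ X with G.Adj y v, threshold (w v + ε) ≤ ∑ v ∈ X, threshold (w v + ε) :=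
    Finset.sum_le_sum_of_subset (Finset.filter_subset _ _)
  have hout := one_le_outDegree hy hxy
  rw [redDeg_thresholdColoring_of_mem hX hw hx, redDeg_thresholdColoring_of_notMem hcover hw hy]
  rw [← Finset.add_sum_erase _ _ hx] at hfilter
  rw [threshold_of_pos hpos] at hfilter ⊢
  rcases hstrict with ⟨v, hv, hvx, hlt⟩ | htwo | ⟨s, hs, hspos, hsy⟩
  · have hinner_lt := Finset.sum_lt_sum hle' ⟨v, Finset.mem_erase.mpr ⟨hvx, hv⟩, hlt⟩
    omega
  · omega
  · have hfilter_lt :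
        ∑ v ∈ X with G.Adj y v, threshold (w v + ε) < ∑ v ∈ X, threshold (w v + ε) :=
      Finset.sum_lt_sum_of_subset (Finset.filter_subset _ _) hs
        (by simpa [G.adj_comm y] using fun _ ↦ hsy)
        (by rw [threshold_of_pos hspos]; exact two_pos) (fun _ _ _ ↦ Nat.zero_le _)
    rw [← Finset.add_sum_erase _ _ hx, threshold_of_pos hpos] at hfilter_lt
    omega

end CliqueCover

section DoubleStar

variable {V : Type*} [Fintype V] [DecidableEq V] {G : SimpleGraph V}

lemma isRedIrregular_thresholdColoring_pair {u v : V} {w : V → ℤ} (huv : G.Adj u v)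
    (hcover : G.IsVertexCover ({u, v} : Finset V)) (hu : w u = 1) (hv : w v = -1)
    (hw : ∀ y ∉ ({u, v} : Finset V), w y = 0) (hout : 1 ≤ outDegree G {u, v} u) :
    IsRedIrregular G (thresholdColoring w) := by
  have hclique : G.IsClique ({u, v} : Finset V) := by simp [huv]
  have hvu : redDeg G (thresholdColoring w) v < redDeg G (thresholdColoring w) u := by
    refine redDeg_lt_redDeg_of_mem hclique hw (by simp) (by simp) huv.ne' (by omega) ?_ (.inr ?_)
    · simp [hu, hv, threshold]
    · simpa [hu, hv, threshold] using Nat.lt_of_succ_le hout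
  refine isRedIrregular_of_isVertexCover hcover ?_ ?_
  · simp only [Finset.coe_pair, Set.mem_insert_iff, Set.mem_singleton_iff]
    rintro a (rfl | rfl) b (rfl | rfl) hab -
    exacts [(hab.ne rfl).elim, hvu.ne', hvu.ne, (hab.ne rfl).elim]
  · intro x hx y hy hxy hr
    rw [thresholdColoring_mk, one_le_threshold_iff, hw y hy] at hr
    obtain rfl : x = u := by
      rcases Finset.mem_insert.mp hx with h | h
      · exact h
      · rw [Finset.mem_singleton.mp h] at hr
        omega
    refine redDeg_lt_redDeg_of_notMem hclique hcover hw (by simp) hy hxy (by omega) ?_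
      (.inl ⟨v, by simp, huv.ne', by simp [hu, hv, threshold]⟩)
    simp +contextual [hu, hv, threshold]

lemma lirTwoLE2_of_double_star {u v : V} (huv : G.Adj u v)
    (hcover : G.IsVertexCover ({u, v} : Finset V)) (hu : 1 ≤ outDegree G {u, v} u)
    (hv : 1 ≤ outDegree G {u, v} v) : LIRtwoLE2 G := by
  let w : V → ℤ := fun x ↦ if x = u then 1 else if x = v then -1 else 0
  have hwu : w u = 1 := if_pos rfl
  have hwv : w v = -1 := by simp [w, huv.ne']
  have hw : ∀ y ∉ ({u, v} : Finset V), w y = 0 := by simp +contextual [w]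
  refine ⟨thresholdColoring w, isLIR2_thresholdColoring
    (isRedIrregular_thresholdColoring_pair huv hcover hwu hwv hw hu) ?_⟩
  rw [Finset.pair_comm] at hcover hw hv
  exact isRedIrregular_thresholdColoring_pair huv.symm hcover (by simp [hwv]) (by simp [hwu])
    (fun y hy ↦ by simp [hw y hy]) hv

end DoubleStar

section BalancedRanking

variable {V : Type*} [DecidableEq V] {G : SimpleGraph V} {X : Finset V} {a b : ℤ} {z : V → ℤ}
  {u v : V}

/-- The weights of the threshold coloring given by a ranking `z` of `X`. Doubling the ranks and
putting weight `-1` off `X` makes the edges leaving `X` all red at positive ranks and all blue at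
the others. -/
def rankWeight (X : Finset V) (z : V → ℤ) (v : V) : ℤ :=
  if v ∈ X then 2 * z v else -1

lemma rankWeight_of_mem (hv : v ∈ X) : rankWeight X z v = 2 * z v := if_pos hv

lemma rankWeight_of_notMem (hv : v ∉ X) : rankWeight X z v = -1 := if_neg hv

variable [Fintype V]

/-- A numbering of the clique `X` by the integers of an interval `[-a, b]` that is symmetric about
`0` up to one element, such that the number of neighbors outside `X` does not decrease as `|z|`
grows among the positive ranks, and likewise among the nonpositive ranks. The field `center` keeps
the blue degree of the vertex of rank `0` above those of its neighbors outside `X`. -/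
structure IsBalancedRanking (G : SimpleGraph V) (X : Finset V) (a b : ℤ) (z : V → ℤ) : Prop where
  one_le_left : 1 ≤ a
  left_le_right : a ≤ b
  right_le_left_add_one : b ≤ a + 1
  bijOn : Set.BijOn z X (Set.Icc (-a) b)
  outDegree_le_of_pos : ∀ u ∈ X, ∀ v ∈ X, 0 < z u → z u < z v → outDegree G X u ≤ outDegree G X v
  outDegree_le_of_nonpos :
    ∀ u ∈ X, ∀ v ∈ X, z u ≤ 0 → z v < z u → outDegree G X u ≤ outDegree G X v
  center : ∀ x ∈ X, z x = 0 → 2 ≤ outDegree G X x ∨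
    ∀ y ∉ X, G.Adj x y → ∃ s ∈ X, z s ≤ 0 ∧ ¬ G.Adj s y

namespace IsBalancedRanking

lemma exists_eq (hz : IsBalancedRanking G X a b z) {i : ℤ} (ha : -a ≤ i) (hb : i ≤ b) :
    ∃ v ∈ X, z v = i :=
  hz.bijOn.surjOn ⟨ha, hb⟩

lemma exists_between_neg (hz : IsBalancedRanking G X a b z) (hu : u ∈ X) (hv : v ∈ X)
    (huv : z u < z v) : ∃ t ∈ X, t ≠ u ∧ t ≠ v ∧ z t + z u ≤ 0 ∧ 0 ≤ z t + z v := by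
  obtain ⟨hau, hub⟩ := hz.bijOn.mapsTo hu
  obtain ⟨-, hvb⟩ := hz.bijOn.mapsTo hv
  have ha := hz.one_le_left
  have hab := hz.left_le_right
  have hba := hz.right_le_left_add_one
  have of_rank (i : ℤ) (hi : -a ≤ i ∧ i ≤ b ∧ i ≠ z u ∧ i ≠ z v ∧ i + z u ≤ 0 ∧ 0 ≤ i + z v) :
      ∃ t ∈ X, t ≠ u ∧ t ≠ v ∧ z t + z u ≤ 0 ∧ 0 ≤ z t + z v := by
    obtain ⟨hai, hib, hiu, hiv, hle, hge⟩ := hi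
    obtain ⟨t, ht, rfl⟩ := hz.exists_eq hai hib
    exact ⟨t, ht, fun h ↦ hiu (h ▸ rfl), fun h ↦ hiv (h ▸ rfl), hle, hge⟩
  by_cases hu0 : z u = 0
  · exact of_rank (-1) (by omega)
  by_cases hneg : z v = -z u
  · exact of_rank 0 (by omega)
  · exact of_rank (-z u) (by omega)

lemma redDeg_lt_redDeg (hz : IsBalancedRanking G X a b z) (hX : G.IsClique X) (hu : u ∈ X)
    (hv : v ∈ X) (huv : z u < z v) :
    redDeg G (thresholdColoring (rankWeight X z)) u <
      redDeg G (thresholdColoring (rankWeight X z)) v := by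
  obtain ⟨t, ht, htu, htv, hle, hge⟩ := hz.exists_between_neg hu hv huv
  refine redDeg_lt_redDeg_of_mem hX (fun y hy ↦ rankWeight_of_notMem hy) hu hv
    (ne_of_apply_ne z huv.ne) ?_ ?_ (.inl ⟨t, ht, htu, htv, threshold_lt_threshold ?_ ?_ ?_⟩)
  all_goals simp only [rankWeight_of_mem, hu, hv, ht]
  any_goals omega
  rcases le_or_gt (z u) 0 with hneg | hpos
  · rw [threshold_of_neg (by omega)]
    simp
  · exact Nat.mul_le_mul (hz.outDegree_le_of_pos u hu v hv hpos huv) (threshold_mono (by omega))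

lemma redDeg_neg_lt_redDeg_neg (hz : IsBalancedRanking G X a b z) (hX : G.IsClique X) (hu : u ∈ X)
    (hv : v ∈ X) (huv : z u < z v) :
    redDeg G (thresholdColoring (-rankWeight X z)) v <
      redDeg G (thresholdColoring (-rankWeight X z)) u := by
  obtain ⟨t, ht, htu, htv, hle, hge⟩ := hz.exists_between_neg hu hv huv
  refine redDeg_lt_redDeg_of_mem hX
    (fun y hy ↦ congrArg Neg.neg (rankWeight_of_notMem hy)) hv hu
    (ne_of_apply_ne z huv.ne') ?_ ?_ (.inl ⟨t, ht, htv, htu, threshold_lt_threshold ?_ ?_ ?_⟩)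
  all_goals simp only [Pi.neg_apply, rankWeight_of_mem, hu, hv, ht]
  any_goals omega
  rcases le_or_gt (z v) 0 with hneg | hpos
  · exact Nat.mul_le_mul (hz.outDegree_le_of_nonpos v hv u hu hneg huv) (threshold_mono (by omega))
  · rw [threshold_of_neg (by omega)]
    simp

lemma isRedIrregular (hz : IsBalancedRanking G X a b z) (hX : G.IsClique X)
    (hcover : G.IsVertexCover X) : IsRedIrregular G (thresholdColoring (rankWeight X z)) := by
  refine isRedIrregular_of_isVertexCover hcover (fun u hu v hv huv _ ↦ ?_)
    (fun x hx y hy hxy hr ↦ ?_)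
  · rcases lt_or_gt_of_ne (hz.bijOn.injOn.ne hu hv huv.ne) with hlt | hlt
    exacts [(hz.redDeg_lt_redDeg hX hu hv hlt).ne, (hz.redDeg_lt_redDeg hX hv hu hlt).ne']
  · rw [thresholdColoring_mk, one_le_threshold_iff, rankWeight_of_mem hx,
      rankWeight_of_notMem hy] at hr
    obtain ⟨q, hq, hzq⟩ := hz.exists_eq (i := 0) (by linarith [hz.one_le_left])
      (by linarith [hz.one_le_left, hz.left_le_right])
    have hqx : q ≠ x := by
      rintro rfl
      omega
    refine redDeg_lt_redDeg_of_notMem hX hcover (fun y hy ↦ rankWeight_of_notMem hy) hx hy hxy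
      ?_ (fun v hv _ ↦ threshold_mono ?_) (.inl ⟨q, hq, hqx, threshold_lt_threshold ?_ ?_ ?_⟩)
    all_goals simp only [rankWeight_of_mem hx, rankWeight_of_mem hq]
    any_goals rw [rankWeight_of_mem hv]
    all_goals omega

lemma isRedIrregular_neg (hz : IsBalancedRanking G X a b z) (hX : G.IsClique X)
    (hcover : G.IsVertexCover X) : IsRedIrregular G (thresholdColoring (-rankWeight X z)) := by
  refine isRedIrregular_of_isVertexCover hcover (fun u hu v hv huv _ ↦ ?_)
    (fun x hx y hy hxy hr ↦ ?_)
  · rcases lt_or_gt_of_ne (hz.bijOn.injOn.ne hu hv huv.ne) with hlt | hlt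
    exacts [(hz.redDeg_neg_lt_redDeg_neg hX hu hv hlt).ne',
      (hz.redDeg_neg_lt_redDeg_neg hX hv hu hlt).ne]
  · rw [thresholdColoring_mk, one_le_threshold_iff, Pi.neg_apply, Pi.neg_apply,
      rankWeight_of_mem hx, rankWeight_of_notMem hy] at hr
    refine redDeg_lt_redDeg_of_notMem hX hcover
      (fun y hy ↦ congrArg Neg.neg (rankWeight_of_notMem hy)) hx hy hxy ?_ (fun v hv hvx ↦ ?_) ?_
    · simp only [Pi.neg_apply, rankWeight_of_mem hx]
      omega
    · have hne : z v ≠ z x := hz.bijOn.injOn.ne hv hx hvx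
      simp only [Pi.neg_apply, rankWeight_of_mem hv, rankWeight_of_mem hx, threshold]
      split_ifs <;> omega
    · rcases eq_or_ne (z x) 0 with hx0 | hx0
      · refine .inr ((hz.center x hx hx0).imp_right fun h ↦ ?_)
        obtain ⟨s, hs, hzs, hsy⟩ := h y hy hxy
        refine ⟨s, hs, ?_, hsy⟩
        simp only [Pi.neg_apply, rankWeight_of_mem hs]
        omega
      · obtain ⟨t, ht, hzt⟩ := hz.exists_eq (i := 1) (by linarith [hz.one_le_left])
          (by linarith [hz.one_le_left, hz.left_le_right])
        have htx : t ≠ x := by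
          rintro rfl
          omega
        refine .inl ⟨t, ht, htx, threshold_lt_threshold ?_ ?_ ?_⟩
        all_goals simp only [Pi.neg_apply, rankWeight_of_mem ht, rankWeight_of_mem hx]
        all_goals omega

lemma lirTwoLE2 (hz : IsBalancedRanking G X a b z) (hX : G.IsClique X)
    (hcover : G.IsVertexCover X) : LIRtwoLE2 G :=
  ⟨_, isLIR2_thresholdColoring (hz.isRedIrregular hX hcover) (hz.isRedIrregular_neg hX hcover)⟩

end IsBalancedRanking

end BalancedRanking

section Ranking

variable {α β : Type*} [LinearOrder β]

lemma exists_bijOn_Ioc_monovaryOn (f : α → β) (S : Finset α) :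
    ∃ p : α → ℤ, Set.BijOn p S (Set.Ioc 0 (S.card : ℤ)) ∧ MonovaryOn f p S := by
  classical
  induction S using Finset.induction_on_max_value f with
  | empty => exact ⟨0, by simp, by simp⟩
  | insert a s ha hmax ih =>
    obtain ⟨p, hp, hmono⟩ := ih
    have hupdate : ∀ x ∈ s, Function.update p a (s.card + 1) x = p x := fun x hx ↦
      Function.update_of_ne (ne_of_mem_of_not_mem hx ha) _ _
    refine ⟨Function.update p a (s.card + 1), ?_, ?_⟩
    · have hIoc : Set.Ioc (0 : ℤ) (insert a s).card =
          insert (s.card + 1 : ℤ) (Set.Ioc 0 (s.card : ℤ)) := by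
        ext i
        simp only [Finset.card_insert_of_notMem ha, Set.mem_Ioc, Set.mem_insert_iff]
        omega
      rw [hIoc, Finset.coe_insert]
      simpa using (hp.congr fun x hx ↦ (hupdate x hx).symm).insert (a := a) (by simp)
    · rw [Finset.coe_insert]
      rintro u (rfl | hu) v (rfl | hv) huv
      · exact le_rfl
      · rw [Function.update_self, hupdate v hv] at huv
        have := (hp.mapsTo hv).2
        omega
      · exact hmax u hu
      · rw [hupdate u hu, hupdate v hv] at huv
        exact hmono hu hv huv

lemma exists_bijOn_Icc_antivaryOn_monovaryOn [DecidableEq α] (f : α → β) {q : α} {L U : Finset α}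
    (hqL : q ∉ L) (hqU : q ∉ U) (hLU : Disjoint L U) :
    ∃ z : α → ℤ, Set.BijOn z (insert q (L ∪ U) : Finset α) (Set.Icc (-L.card) U.card) ∧
      (∀ x, z x < 0 ↔ x ∈ L) ∧ (∀ x, 0 < z x ↔ x ∈ U) ∧ AntivaryOn f z L ∧ MonovaryOn f z U := by
  obtain ⟨p, hp, hfp⟩ := exists_bijOn_Ioc_monovaryOn f L
  obtain ⟨r, hr, hfr⟩ := exists_bijOn_Ioc_monovaryOn f U
  let z : α → ℤ := fun x ↦ if x ∈ L then -p x else if x ∈ U then r x else 0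
  have hzL : ∀ x ∈ L, z x = -p x := fun x hx ↦ if_pos hx
  have hzU : ∀ x ∈ U, z x = r x := fun x hx ↦ by
    simp [z, hx, Finset.disjoint_right.mp hLU hx]
  have hz0 : ∀ x, x ∉ L → x ∉ U → z x = 0 := fun x hxL hxU ↦ by simp [z, hxL, hxU]
  have hp_pos : ∀ x ∈ L, 0 < p x := fun x hx ↦ (hp.mapsTo hx).1
  have hr_pos : ∀ x ∈ U, 0 < r x := fun x hx ↦ (hr.mapsTo hx).1
  refine ⟨z, ⟨fun x _ ↦ ?_, fun x hx y hy hxy ↦ ?_, fun i hi ↦ ?_⟩, fun x ↦ ?_, fun x ↦ ?_,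
    fun u hu v hv huv ↦ ?_, fun u hu v hv huv ↦ ?_⟩
  · have hpL : x ∈ L → p x ≤ L.card := fun hx ↦ (hp.mapsTo hx).2
    have hrU : x ∈ U → r x ≤ U.card := fun hx ↦ (hr.mapsTo hx).2
    grind
  · have hpL : x ∈ L → y ∈ L → p x = p y → x = y := fun hx hy h ↦ hp.injOn hx hy h
    have hrU : x ∈ U → y ∈ U → r x = r y → x = y := fun hx hy h ↦ hr.injOn hx hy h
    grind
  · rcases lt_trichotomy i 0 with hneg | rfl | hpos
    · obtain ⟨x, hx, hpx⟩ := hp.surjOn (Set.mem_Ioc.mpr ⟨neg_pos.mpr hneg, neg_le.mp hi.1⟩)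
      exact ⟨x, by simp [Finset.mem_coe.mp hx], by rw [hzL x hx, hpx, neg_neg]⟩
    · exact ⟨q, by simp, hz0 q hqL hqU⟩
    · obtain ⟨x, hx, hrx⟩ := hr.surjOn (Set.mem_Ioc.mpr ⟨hpos, hi.2⟩)
      exact ⟨x, by simp [Finset.mem_coe.mp hx], by rw [hzU x hx, hrx]⟩
  · grind
  · grind
  · rw [hzL u hu, hzL v hv] at huv
    exact hfp hv hu (neg_lt_neg_iff.mp huv)
  · rw [hzU u hu, hzU v hv] at huv
    exact hfr hu hv huv

end Ranking

section Split

lemma exists_isClique_isVertexCover_forall_exists_not_adj {V : Type*} [Finite V]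
    {G : SimpleGraph V} (hsplit : ∃ C : Set V, G.IsClique C ∧ G.IsVertexCover C) :
    ∃ X : Finset V, G.IsClique X ∧ G.IsVertexCover X ∧ ∀ y ∉ X, ∃ s ∈ X, ¬ G.Adj s y := by
  classical
  obtain ⟨C, hclique, hcover⟩ := hsplit
  lift C to Finset V using C.toFinite
  obtain ⟨X, -, ⟨hXclique, hXcover⟩, hmax⟩ := Finite.exists_le_maximal
    (p := fun X : Finset V ↦ G.IsClique (X : Set V) ∧ G.IsVertexCover (X : Set V))
    ⟨hclique, hcover⟩
  refine ⟨X, hXclique, hXcover, fun y hy ↦ ?_⟩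
  by_contra! hadj
  refine hy (hmax ⟨?_, ?_⟩ (Finset.subset_insert y X) (Finset.mem_insert_self y X))
  · rw [Finset.coe_insert]
    exact hXclique.insert fun s hs _ ↦ (hadj s hs).symm
  · exact hXcover.subset (by simp)

lemma two_lt_degree_add_degree {V : Type*} [Fintype V] {G : SimpleGraph V} (hconn : G.Connected)
    (hK2 : ¬ Nonempty (G ≃g (⊤ : SimpleGraph (Fin 2)))) {u v : V} (huv : G.Adj u v) :
    2 < G.degree u + G.degree v := by
  by_contra! hle
  have degree_pos {x y : V} (hxy : G.Adj x y) : 0 < G.degree x :=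
    (G.degree_pos_iff_exists_adj x).mpr ⟨y, hxy⟩
  have hu := degree_pos huv
  have hv := degree_pos huv.symm
  have eq_of_adj {x y y' : V} (hx : G.degree x ≤ 1) (hy : G.Adj x y) (hy' : G.Adj x y') : y = y' :=
    Finset.card_le_one.mp hx y (by simpa using hy) y' (by simpa using hy')
  have mem_pair (x : V) : x ∈ ({u, v} : Set V) := by
    by_contra hx
    obtain ⟨p⟩ := hconn.preconnected u x
    obtain ⟨d, -, hfst | hfst, hsnd⟩ := p.exists_boundary_dart {u, v} (by simp) hx
    · exact hsnd (.inr (eq_of_adj (by omega) (hfst ▸ d.adj) huv))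
    · exact hsnd (.inl (eq_of_adj (by omega) (hfst ▸ d.adj) huv.symm))
  have htop : G = ⊤ := by
    ext x y
    refine ⟨fun h ↦ h.ne, fun hxy ↦ ?_⟩
    rcases mem_pair x with rfl | rfl <;> rcases mem_pair y with rfl | rfl
    exacts [(hxy rfl).elim, huv, huv.symm, (hxy rfl).elim]
  have hcard : Fintype.card V = 2 := by
    classical
    rw [← Finset.card_univ, ← Finset.card_pair huv.ne]
    congr 1
    ext x
    simpa using mem_pair x
  subst htop
  exact hK2 ⟨SimpleGraph.Iso.completeGraph (Fintype.equivFinOfCardEq hcard)⟩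

variable {V : Type*} [Fintype V] [DecidableEq V] {G : SimpleGraph V} {X : Finset V}

lemma exists_outDegree_min_exists_not_adj (hnt : X.Nontrivial)
    (hmax : ∀ y ∉ X, ∃ s ∈ X, ¬ G.Adj s y) :
    ∃ q ∈ X, (∀ v ∈ X, outDegree G X q ≤ outDegree G X v) ∧ ∃ s ∈ X, s ≠ q ∧
      (2 ≤ outDegree G X q ∨ ∀ y ∉ X, G.Adj q y → ¬ G.Adj s y) := by
  obtain ⟨q, hq, hmin⟩ := X.exists_min_image (outDegree G X) hnt.nonempty
  refine ⟨q, hq, hmin, ?_⟩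
  by_cases hout : ∃ y ∉ X, G.Adj q y
  · obtain ⟨y, hy, hqy⟩ := hout
    obtain ⟨s, hs, hsy⟩ := hmax y hy
    refine ⟨s, hs, fun h ↦ hsy (h ▸ hqy), or_iff_not_imp_left.mpr fun hlt y' hy' hqy' ↦ ?_⟩
    obtain rfl : y' = y := Finset.card_le_one.mp (Nat.le_of_lt_succ (not_le.mp hlt)) y'
      (by simpa using ⟨hqy', hy'⟩) y (by simpa using ⟨hqy, hy⟩)
    exact hsy
  · obtain ⟨s, hs, hsq⟩ := hnt.exists_ne q
    exact ⟨s, hs, hsq, .inr fun y hy hqy ↦ (hout ⟨y, hy, hqy⟩).elim⟩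

lemma exists_isBalancedRanking (hX : 3 ≤ X.card) (hmax : ∀ y ∉ X, ∃ s ∈ X, ¬ G.Adj s y) :
    ∃ a b z, IsBalancedRanking G X a b z := by
  obtain ⟨q, hq, hmin, s, hs, hsq, hcenter⟩ :=
    exists_outDegree_min_exists_not_adj (Finset.one_lt_card_iff_nontrivial.mp (by omega)) hmax
  have hcard := Finset.card_erase_of_mem hq
  obtain ⟨L, hsL, hLX, hL⟩ := Finset.exists_subsuperset_card_eq (n := (X.card - 1) / 2)
    (Finset.singleton_subset_iff.mpr (Finset.mem_erase.mpr ⟨hsq, hs⟩))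
    (by rw [Finset.card_singleton]; omega) (by omega)
  have hqL : q ∉ L := fun h ↦ Finset.notMem_erase q X (hLX h)
  have hqU : q ∉ X.erase q \ L := by simp
  have hinsert : insert q (L ∪ X.erase q \ L) = X := by
    rw [Finset.union_sdiff_of_subset hLX, Finset.insert_erase hq]
  have hU : (X.erase q \ L).card = X.card - 1 - (X.card - 1) / 2 := by
    rw [Finset.card_sdiff_of_subset hLX, hcard, hL]
  obtain ⟨z, hbij, hzL, hzU, hanti, hmono⟩ :=
    exists_bijOn_Icc_antivaryOn_monovaryOn (outDegree G X) hqL hqU Finset.disjoint_sdiff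
  rw [hinsert] at hbij
  have hzq : z q = 0 :=
    (not_lt.mp (mt (hzU q).mp hqU)).antisymm (not_lt.mp (mt (hzL q).mp hqL))
  have eq_q {x : V} (hx : x ∈ X) (h0 : z x = 0) : x = q := hbij.injOn hx hq (h0.trans hzq.symm)
  refine ⟨_, _, z, ⟨by omega, by omega, by omega, hbij, fun u _ v _ hpos huv ↦ ?_,
    fun u hu v hv hneg huv ↦ ?_, fun x hx hx0 ↦ ?_⟩⟩
  · exact hmono ((hzU u).mp hpos) ((hzU v).mp (hpos.trans huv)) huv
  · rcases hneg.lt_or_eq with hneg | h0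
    · exact hanti ((hzL v).mp (huv.trans hneg)) ((hzL u).mp hneg) huv
    · rw [eq_q hu h0]
      exact hmin v hv
  · rw [eq_q hx hx0]
    exact hcenter.imp_right fun h y hy hqy ↦
      ⟨s, hs, ((hzL s).mpr (Finset.singleton_subset_iff.mp hsL)).le, h y hy hqy⟩

lemma lirTwoLE2_of_isVertexCover_pair {u v : V} (huv : G.Adj u v)
    (hcover : G.IsVertexCover ({u, v} : Finset V))
    (hdeg : ∀ u v, G.Adj u v → 2 < G.degree u + G.degree v) : LIRtwoLE2 G := by
  have star {u v : V} (hcover : G.IsVertexCover ({u, v} : Finset V))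
      (hv : outDegree G {u, v} v = 0) : LIRtwoLE2 G := by
    refine lirTwoLE2_of_isVertexCover_subsingleton (Set.subsingleton_singleton (a := u)) ?_ hdeg
    have adj_v : ∀ y, G.Adj v y → y = u := fun y hvy ↦ by
      by_contra hyu
      have := one_le_outDegree (X := {u, v}) (by simp [hyu, hvy.ne']) hvy
      omega
    intro x y hxy
    have hxy' := hxy.symm
    have := hcover hxy
    simp only [Finset.coe_pair, Set.mem_insert_iff, Set.mem_singleton_iff] at this ⊢
    grind
  by_cases hu : outDegree G {u, v} u = 0
  · rw [Finset.pair_comm] at hcover hu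
    exact star hcover hu
  by_cases hv : outDegree G {u, v} v = 0
  · exact star hcover hv
  exact lirTwoLE2_of_double_star huv hcover (Nat.one_le_iff_ne_zero.mpr hu)
    (Nat.one_le_iff_ne_zero.mpr hv)

theorem lir_two_mul_split_general (G : SimpleGraph V)
    (hsplit : ∃ C : Set V, G.IsClique C ∧ G.IsIndepSet Cᶜ)
    (hdeg : ∀ u v, G.Adj u v → 2 < G.degree u + G.degree v) : LIRtwoLE2 G := by
  simp only [SimpleGraph.isIndepSet_compl_iff_isVertexCover] at hsplit
  obtain ⟨X, hX, hcover, hmax⟩ := exists_isClique_isVertexCover_forall_exists_not_adj hsplit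
  rcases le_or_gt X.card 1 with hcard | hcard
  · exact lirTwoLE2_of_isVertexCover_subsingleton
      (fun _ ha _ hb ↦ Finset.card_le_one.mp hcard _ ha _ hb) hcover hdeg
  rcases (Nat.succ_le_of_lt hcard).eq_or_lt with hcard | hcard
  · obtain ⟨u, v, huv, rfl⟩ := Finset.card_eq_two.mp hcard.symm
    exact lirTwoLE2_of_isVertexCover_pair (hX (by simp) (by simp) huv) hcover hdeg
  · obtain ⟨a, b, z, hz⟩ := exists_isBalancedRanking hcard hmax
    exact hz.lirTwoLE2 hX hcover

end Split

/-- If `G` is a connected split graph (its vertex set splits into a clique `X`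
and an independent set `Xᶜ`) not isomorphic to `K₂`, then `lir(²G) ≤ 2`. -/
theorem lir_two_mul_split {V : Type*} [Fintype V] [DecidableEq V]
    (G : SimpleGraph V) (hconn : G.Connected)
    (hsplit : ∃ X : Set V,
      (∀ a ∈ X, ∀ b ∈ X, a ≠ b → G.Adj a b) ∧
      (∀ a ∉ X, ∀ b ∉ X, ¬ G.Adj a b))
    (hK2 : ¬ Nonempty (G ≃g (⊤ : SimpleGraph (Fin 2)))) :
    LIRtwoLE2 G := by
  obtain ⟨X, hX, hXc⟩ := hsplit
  exact lir_two_mul_split_general G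
    ⟨X, fun a ha b hb hab ↦ hX a ha b hb hab, fun a ha b hb _ ↦ hXc a ha b hb⟩
    fun u v huv ↦ two_lt_degree_add_degree hconn hK2 huv
end

section
/- Let G be a connected simple graph with maximum degree at most 3 that is not isomorphic to K2 (the complete graph on two vertices). If the set of all vertices of degree 3 in G is an independent set (no two degree-3 vertices are adjacent), then lir(^2G) ≤ 2. -/
open scoped Classical

/-!
Write the red multiplicity of an edge `e` as `s e + 1` with a signed label `s e ∈ {-1, 0, 1}`. The
red and blue degrees of `x` are then `deg x ± excess x`, where the excess is the sum of the labels
at `x`. If the edges at a vertex `u` of degree three all carry the same sign `ε u`, except for at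
most one label `0`, then the excess of `u` is at least two in absolute value; this separates `u`
from its neighbours, which have degree at most two. Two adjacent vertices of degree two are
separated as soon as the outer edges at them carry different labels.

These two requirements compete only on threads `u a b v` between vertices of degree three with
`ε u = ε v`, where one of the two end edges has to be labelled `0`. For `ε` a maximum cut of the
multigraph of threads, at most half of the non-loop threads at a vertex are monochromatic, and a
loop needs a `0` at only one of its ends; so at most one of the three edges at a vertex becomes `0`.
All other edges are labelled greedily: each is the outer edge opposite to at most two others, and
there are three labels. A leaf `w` with neighbour `v` of degree two is separated from `v` if the
other edge at `v` is labelled `0` or like `s(w, v)`, so labels `0` and `1` are used near leaves.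
-/

theorem exists_coloring_extending {α β : Type*} [Finite α] (H : SimpleGraph α) {P : Set α}
    {p : α → β} {L : α → Finset β} (hp : ∀ a ∈ P, ∀ b ∈ P, H.Adj a b → p a ≠ p b)
    (hL : ∀ a ∉ P, (H.neighborSet a).ncard < (L a).card) :
    ∃ c : H.Coloring β, (∀ a ∈ P, c a = p a) ∧ ∀ a ∉ P, c a ∈ L a := by
  induction P using WellFoundedGT.induction generalizing p with
  | ind P ih =>
    by_cases hP : ∃ a, a ∉ P
    · obtain ⟨a, ha⟩ := hP
      obtain ⟨t, htL, ht⟩ : ∃ t ∈ (L a : Set β), t ∉ p '' H.neighborSet a := by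
        refine Set.exists_mem_notMem_of_ncard_lt_ncard ?_
        exact (Set.ncard_image_le (Set.toFinite _)).trans_lt (by simpa using hL a ha)
      have hne : ∀ b ∈ P, b ≠ a := fun b hb hba => ha (hba ▸ hb)
      obtain ⟨c, hcP, hcL⟩ := ih (insert a P) (Set.ssubset_insert ha)
        (p := Function.update p a t) (by grind [SimpleGraph.mem_neighborSet, SimpleGraph.Adj.symm,
          SimpleGraph.Adj.ne, Function.update_apply, SimpleGraph.irrefl])
        (fun b hb => hL b fun h => hb (Set.mem_insert_of_mem a h))
      refine ⟨c, fun b hb => ?_, fun b hb => ?_⟩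
      · rw [hcP b (Set.mem_insert_of_mem a hb), Function.update_of_ne (hne b hb)]
      · by_cases hba : b = a
        · subst hba
          simpa [hcP b (Set.mem_insert b P)] using htL
        · exact hcL b (by simp [hba, hb])
    · push Not at hP
      exact ⟨SimpleGraph.Coloring.mk p fun {a b} => hp a (hP a) b (hP b), fun _ _ => rfl,
        fun a ha => absurd (hP a) ha⟩

/-- Local optimality of a maximum cut of the multigraph with half-edges `α`. -/
theorem exists_sign_sum_nonpos {α β : Type*} [Fintype α] [Finite β] {σ : α → α}
    (hσ : Function.Involutive σ) (p : α → β) :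
    ∃ ε : β → ℤˣ, ∀ x, ∑ a with p a = x ∧ p (σ a) ≠ x, (ε (p a) * ε (p (σ a)) : ℤ) ≤ 0 := by
  let E (ε : β → ℤˣ) : ℤ := ∑ a, (ε (p a) * ε (p (σ a)) : ℤ)
  obtain ⟨ε, hε⟩ := Finite.exists_min E
  refine ⟨ε, fun x => ?_⟩
  let g (a : α) : ℤ := if p a = x ∧ p (σ a) ≠ x then ε (p a) * ε (p (σ a)) else 0
  have g_sum : ∑ a, g (σ a) = ∑ a, g a := Equiv.sum_comp hσ.toPerm g
  have flip : E (Function.update ε x (-ε x)) = E ε - 2 * ∑ a, (g a + g (σ a)) := by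
    simp only [E, Finset.mul_sum, ← Finset.sum_sub_distrib]
    refine Finset.sum_congr rfl fun a _ => ?_
    by_cases ha : p a = x <;> by_cases hb : p (σ a) = x <;>
      simp [g, hσ a, ha, hb] <;> ring
  have key := hε (Function.update ε x (-ε x))
  rw [flip, Finset.sum_add_distrib, g_sum] at key
  rw [Finset.sum_filter]
  linarith

theorem two_mul_card_le_card_of_sum_nonpos {α β : Type*} [Fintype α] {σ : α → α}
    (hσ : Function.Involutive σ) {p : α → β} {ε : β → ℤˣ} {Z : Set α}
    (hZ : ∀ a ∈ Z, σ a ∉ Z ∧ ε (p a) = ε (p (σ a))) {x : β}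
    (hε : ∑ a with p a = x ∧ p (σ a) ≠ x, (ε (p a) * ε (p (σ a)) : ℤ) ≤ 0) :
    2 * Finset.card {a | p a = x ∧ a ∈ Z} ≤ Finset.card {a | p a = x} := by
  let g (a : α) : ℤ := if p a = x then (if a ∈ Z then -1 else 1) else 0
  let t (a : α) : ℤ := if p a = x ∧ p (σ a) ≠ x then ε (p a) * ε (p (σ a)) else 0
  have pair_nonneg : ∀ a, 0 ≤ (g a + g (σ a)) + (t a + t (σ a)) := by
    intro a
    have unit_bound : ∀ η η' : ℤˣ, (-1 : ℤ) ≤ η * η' ∧ (η = η' → (η * η' : ℤ) = 1) := by decide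
    have := unit_bound (ε (p a)) (ε (p (σ a)))
    have := unit_bound (ε (p (σ a))) (ε (p a))
    have := hZ a
    have := hZ (σ a)
    simp only [hσ a] at this
    simp only [g, t, hσ a]
    split_ifs <;> grind
  have g_sum : ∑ a, g (σ a) = ∑ a, g a := Equiv.sum_comp hσ.toPerm g
  have t_sum : ∑ a, t (σ a) = ∑ a, t a := Equiv.sum_comp hσ.toPerm t
  have t_nonpos : ∑ a, t a ≤ 0 := by simpa only [t, Finset.sum_filter] using hε
  have g_eq : ∑ a, g a = Finset.card {a | p a = x} - 2 * Finset.card {a | p a = x ∧ a ∈ Z} := by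
    simp only [Finset.natCast_card_filter, Finset.mul_sum, ← Finset.sum_sub_distrib]
    exact Finset.sum_congr rfl fun a _ => by simp only [g]; split_ifs <;> simp_all
  have sum_nonneg := Finset.sum_nonneg fun a (_ : a ∈ Finset.univ) => pair_nonneg a
  simp only [Finset.sum_add_distrib, g_sum, t_sum] at sum_nonneg
  omega

theorem exists_sign_halfEdge_selection {α β : Type*} [Fintype α] [Finite β] {σ : α → α}
    (hσ : Function.Involutive σ) (p : α → β) :
    ∃ (ε : β → ℤˣ) (Z : Set α), (∀ a ∈ Z, σ a ∉ Z ∧ ε (p a) = ε (p (σ a))) ∧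
      (∀ a ∉ Z, σ a ≠ a → ε (p a) = ε (p (σ a)) → σ a ∈ Z) ∧
      ∀ x, 2 * Finset.card {a | p a = x ∧ a ∈ Z} ≤ Finset.card {a | p a = x} := by
  obtain ⟨ε, hε⟩ := exists_sign_sum_nonpos hσ p
  obtain ⟨Z, mem_Z⟩ : ∃ Z : Set α, ∀ a,
      a ∈ Z ↔ ε (p a) = ε (p (σ a)) ∧ WellOrderingRel a (σ a) := ⟨_, fun _ => Iff.rfl⟩
  have hZ : ∀ a ∈ Z, σ a ∉ Z ∧ ε (p a) = ε (p (σ a)) := by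
    simp only [mem_Z, hσ _]
    exact fun a ha => ⟨fun hb => asymm_of WellOrderingRel ha.2 hb.2, ha.1⟩
  refine ⟨ε, Z, hZ, fun a ha hne he => ?_,
    fun x => two_mul_card_le_card_of_sum_nonpos hσ hZ (hε x)⟩
  simp only [mem_Z, hσ _] at ha ⊢
  rcases trichotomous_of WellOrderingRel a (σ a) with hlt | heq | hgt
  · exact absurd ⟨he, hlt⟩ ha
  · exact absurd heq.symm hne
  · exact ⟨he.symm, hgt⟩

theorem exists_extension_of_rightUnique {α β : Type*} {R : α → β → Prop}
    (hR : Relator.RightUnique R) (d : α → β) :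
    ∃ p : α → β, (∀ a b, R a b → p a = b) ∧ ∀ a, (∀ b, ¬ R a b) → p a = d a := by
  refine ⟨fun a => if h : ∃ b, R a b then h.choose else d a, fun a b hab => ?_, fun a ha => ?_⟩
  · have h : ∃ b, R a b := ⟨b, hab⟩
    simpa only [dif_pos h] using hR h.choose_spec hab
  · exact dif_neg (not_exists.2 ha)

theorem exists_involutive_of_rightUnique {α : Type*} {R : α → α → Prop}
    (hsymm : ∀ ⦃a b⦄, R a b → R b a) (hR : Relator.RightUnique R) :
    ∃ σ : α → α, Function.Involutive σ ∧ (∀ a b, R a b → σ a = b) ∧ ∀ a, σ a ≠ a → R a (σ a) := by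
  obtain ⟨σ, hσ, hσ'⟩ := exists_extension_of_rightUnique hR id
  have rel_of_ne : ∀ a, σ a ≠ a → R a (σ a) := fun a hne => by
    by_contra hn
    exact hne (hσ' a fun b hab => hn ((hσ a b hab).symm ▸ hab))
  refine ⟨σ, fun a => ?_, hσ, rel_of_ne⟩
  by_cases ha : σ a = a
  · rw [ha, ha]
  · exact hσ _ _ (hsymm (rel_of_ne a ha))

section Links

variable {V : Type*} [Fintype V] {G : SimpleGraph V} {a b c u v x y : V}

theorem eq_of_adj_of_degree_eq_one (hv : G.degree v = 1) (ha : G.Adj v a) (hb : G.Adj v b) :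
    a = b :=
  (SimpleGraph.degree_eq_one_iff_existsUnique_adj.1 hv).unique ha hb

theorem exists_neighborFinset_eq_pair (hv : G.degree v = 2) (ha : G.Adj v a) :
    ∃ b, a ≠ b ∧ G.neighborFinset v = {a, b} := by
  obtain ⟨b, c, hbc, h⟩ := Finset.card_eq_two.1 hv
  have : a ∈ G.neighborFinset v := by simpa using ha
  rcases Finset.mem_insert.1 (h ▸ this) with rfl | hac
  · exact ⟨c, hbc, h⟩
  · rw [Finset.mem_singleton.1 hac]
    exact ⟨b, hbc.symm, by rw [h, Finset.pair_comm]⟩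

theorem exists_adj_ne_of_degree_eq_two (hv : G.degree v = 2) (ha : G.Adj v a) :
    ∃ b, G.Adj v b ∧ b ≠ a := by
  obtain ⟨b, hab, h⟩ := exists_neighborFinset_eq_pair hv ha
  exact ⟨b, by simp [← SimpleGraph.mem_neighborFinset, h], hab.symm⟩

theorem eq_of_adj_of_degree_eq_two (hv : G.degree v = 2) (ha : G.Adj v a) (hb : G.Adj v b)
    (hc : G.Adj v c) (hba : b ≠ a) (hca : c ≠ a) : b = c := by
  obtain ⟨d, -, h⟩ := exists_neighborFinset_eq_pair hv ha
  simp only [← SimpleGraph.mem_neighborFinset, h, Finset.mem_insert, Finset.mem_singleton] at hb hc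
  exact (hb.resolve_left hba).trans (hc.resolve_left hca).symm

/-- The walk `x u v y` is a link: `u` and `v` have degree two, `x` is the neighbour of `u` other
than `v`, and `y` is the neighbour of `v` other than `u`. The ends `x` and `y` may coincide. -/
structure IsLink (G : SimpleGraph V) (x u v y : V) : Prop where
  adj_left : G.Adj x u
  adj_mid : G.Adj u v
  adj_right : G.Adj v y
  left_ne : x ≠ v
  right_ne : y ≠ u
  degree_left : G.degree u = 2
  degree_right : G.degree v = 2

theorem IsLink.symm (h : IsLink G x u v y) : IsLink G y v u x :=
  ⟨h.adj_right.symm, h.adj_mid.symm, h.adj_left.symm, h.right_ne, h.left_ne, h.degree_right,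
    h.degree_left⟩

theorem IsLink.eq_of_adj_left (h : IsLink G x u v y) (ha : G.Adj u a) (hax : a ≠ x) : a = v :=
  eq_of_adj_of_degree_eq_two h.degree_left h.adj_left.symm ha h.adj_mid hax h.left_ne.symm

theorem IsLink.eq_of_adj_right (h : IsLink G x u v y) (ha : G.Adj v a) (hau : a ≠ u) : a = y :=
  eq_of_adj_of_degree_eq_two h.degree_right h.adj_mid.symm ha h.adj_right hau h.right_ne

theorem IsLink.unique (h : IsLink G x u v y) (h' : IsLink G x u a b) : a = v ∧ b = y := by
  obtain rfl := h.eq_of_adj_left h'.adj_mid h'.left_ne.symm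
  exact ⟨rfl, h.eq_of_adj_right h'.adj_right h'.right_ne⟩

/-- The edges joined to `s(x, u)` by a link `x u v y`. -/
def linkedEdges (G : SimpleGraph V) (x u : V) : Set (Sym2 V) :=
  {f | ∃ v y, IsLink G x u v y ∧ f = s(v, y)}

theorem subsingleton_linkedEdges : (linkedEdges G x u).Subsingleton := by
  rintro _ ⟨v, y, h, rfl⟩ _ ⟨a, b, h', rfl⟩
  obtain ⟨rfl, rfl⟩ := h.unique h'
  rfl

theorem linkedEdges_eq_empty
    (h : G.degree u = 2 → ∀ v, G.Adj u v → v ≠ x → G.degree v ≠ 2) : linkedEdges G x u = ∅ := by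
  refine Set.eq_empty_of_forall_notMem ?_
  rintro _ ⟨v, y, hl, rfl⟩
  exact h hl.degree_left v hl.adj_mid hl.left_ne.symm hl.degree_right

/-- The graph on unordered pairs in which the two end edges of every link are adjacent. Its
proper colourings by signed labels are exactly those telling apart adjacent vertices of degree
two. -/
def conflictGraph (G : SimpleGraph V) : SimpleGraph (Sym2 V) where
  Adj e f := ∃ x u v y, IsLink G x u v y ∧ e = s(x, u) ∧ f = s(v, y)
  symm := ⟨by
    rintro e f ⟨x, u, v, y, h, he, hf⟩
    exact ⟨y, v, u, x, h.symm, by rw [hf, Sym2.eq_swap], by rw [he, Sym2.eq_swap]⟩⟩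
  loopless := ⟨by
    rintro e ⟨x, u, v, y, h, rfl, he⟩
    rcases Sym2.eq_iff.1 he with ⟨hxv, -⟩ | ⟨-, huv⟩
    exacts [h.left_ne hxv, h.adj_mid.ne huv]⟩

theorem neighborSet_conflictGraph_subset :
    (conflictGraph G).neighborSet s(x, u) ⊆ linkedEdges G x u ∪ linkedEdges G u x := by
  rintro f ⟨a, b, v, y, h, he, rfl⟩
  rcases Sym2.eq_iff.1 he with ⟨rfl, rfl⟩ | ⟨rfl, rfl⟩
  exacts [Or.inl ⟨v, y, h, rfl⟩, Or.inr ⟨v, y, h, rfl⟩]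

theorem ncard_neighborSet_conflictGraph_le_two (e : Sym2 V) :
    ((conflictGraph G).neighborSet e).ncard ≤ 2 := by
  induction e with
  | h x u =>
    calc _ ≤ (linkedEdges G x u ∪ linkedEdges G u x).ncard :=
          Set.ncard_le_ncard neighborSet_conflictGraph_subset
      _ ≤ (linkedEdges G x u).ncard + (linkedEdges G u x).ncard := Set.ncard_union_le _ _
      _ ≤ 1 + 1 := add_le_add (Set.ncard_le_one_iff_subsingleton.2 subsingleton_linkedEdges)
          (Set.ncard_le_one_iff_subsingleton.2 subsingleton_linkedEdges)

theorem ncard_neighborSet_conflictGraph_le_one (h : linkedEdges G u x = ∅) :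
    ((conflictGraph G).neighborSet s(x, u)).ncard ≤ 1 :=
  Set.ncard_le_one_iff_subsingleton.2 <| (subsingleton_linkedEdges (x := x) (u := u)).anti <|
    neighborSet_conflictGraph_subset.trans (by rw [h, Set.union_empty])

theorem isIsolated_conflictGraph (h : linkedEdges G x u = ∅) (h' : linkedEdges G u x = ∅) :
    (conflictGraph G).IsIsolated s(x, u) := fun f hf => by
  simpa [h, h'] using neighborSet_conflictGraph_subset hf

end Links

section Prelabeling

variable {V : Type*} [Fintype V] {G : SimpleGraph V} {a b u v w x : V}

/-- A link `u a b v` whose ends `u` and `v` have degree three. -/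
structure IsThread (G : SimpleGraph V) (u a b v : V) : Prop extends IsLink G u a b v where
  degree_start : G.degree u = 3
  degree_end : G.degree v = 3

theorem IsThread.symm (h : IsThread G u a b v) : IsThread G v b a u :=
  ⟨h.toIsLink.symm, h.degree_end, h.degree_start⟩

theorem exists_involutive_dart_isThread (G : SimpleGraph V) :
    ∃ σ : G.Dart → G.Dart, Function.Involutive σ ∧
      (∀ d d' : G.Dart, IsThread G d.fst d.snd d'.snd d'.fst → σ d = d') ∧
      ∀ d, σ d ≠ d → IsThread G d.fst d.snd (σ d).snd (σ d).fst := by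
  refine exists_involutive_of_rightUnique
    (R := fun d d' : G.Dart => IsThread G d.fst d.snd d'.snd d'.fst) (fun _ _ h => h.symm)
    fun d d' d'' h' h'' => ?_
  obtain ⟨hsnd, hfst⟩ := h'.toIsLink.unique h''.toIsLink
  exact SimpleGraph.Dart.ext _ _ (Prod.ext hfst.symm hsnd.symm)

theorem exists_thread_selection (G : SimpleGraph V) :
    ∃ (ε : V → ℤˣ) (Z : V → V → Prop), (∀ u a, Z u a → ∃ b v, IsThread G u a b v) ∧
      (∀ u a b v, IsThread G u a b v → Z u a → ¬ Z v b ∧ ε u = ε v) ∧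
      (∀ u a b v, IsThread G u a b v → ¬ Z u a → ε u = ε v → Z v b) ∧
      ∀ u, 2 * Finset.card {a ∈ G.neighborFinset u | Z u a} ≤ G.degree u := by
  obtain ⟨σ, hσ, σ_eq, σ_thread⟩ := exists_involutive_dart_isThread G
  obtain ⟨ε, S, hS, hS', card_S⟩ := exists_sign_halfEdge_selection hσ fun d : G.Dart => d.fst
  obtain ⟨Z, mem_Z⟩ : ∃ Z : V → V → Prop, ∀ u a, Z u a ↔ ∃ h : G.Adj u a, ⟨(u, a), h⟩ ∈ S :=
    ⟨_, fun _ _ => Iff.rfl⟩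
  refine ⟨ε, Z, fun u a h => ?_, fun u a b v h hu => ?_, fun u a b v h hn he => ?_, fun u => ?_⟩
  · obtain ⟨hua, hd⟩ := (mem_Z u a).1 h
    exact ⟨_, _, σ_thread _ fun heq => (hS _ hd).1 (heq.symm ▸ hd)⟩
  · obtain ⟨hua, hd⟩ := (mem_Z u a).1 hu
    have := hS _ hd
    rw [σ_eq _ ⟨(v, b), h.adj_right.symm⟩ h] at this
    exact ⟨fun hv => this.1 ((mem_Z v b).1 hv).2, this.2⟩
  · have σ_d := σ_eq ⟨(u, a), h.adj_left⟩ ⟨(v, b), h.adj_right.symm⟩ h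
    have σ_ne : σ ⟨(u, a), h.adj_left⟩ ≠ ⟨(u, a), h.adj_left⟩ := fun heq =>
      h.adj_mid.ne' (congrArg (fun d => d.snd) (σ_d.symm.trans heq))
    exact (mem_Z v b).2 ⟨h.adj_right.symm,
      σ_d ▸ hS' _ (fun hd => hn ((mem_Z u a).2 ⟨_, hd⟩)) σ_ne (σ_d ▸ he)⟩
  · refine (Nat.mul_le_mul_left 2 ?_).trans
      ((card_S u).trans_eq (G.dart_fst_fiber_card_eq_degree u))
    refine Finset.card_le_card_of_surjOn (fun d => d.snd) fun a ha => ?_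
    obtain ⟨hua, hd⟩ := (mem_Z u a).1 (Finset.mem_filter.1 ha).2
    exact ⟨⟨(u, a), hua⟩, by simpa using hd, rfl⟩

theorem exists_thread_labeling (G : SimpleGraph V) :
    ∃ (ε : V → ℤˣ) (f : V → V → ℤ),
      (∀ u a, f u a = ε u ∨ f u a = 0 ∧ ∃ b v, IsThread G u a b v) ∧
      (∀ u a b v, IsThread G u a b v → f u a ≠ f v b) ∧
      ∀ u, 2 * Finset.card {a ∈ G.neighborFinset u | f u a = 0} ≤ G.degree u := by
  obtain ⟨ε, Z, hZ, Z_left, Z_right, card_Z⟩ := exists_thread_selection G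
  refine ⟨ε, fun u a => if Z u a then 0 else ε u, fun u a => ?_, fun u a b v h => ?_,
    fun u => by simpa using card_Z u⟩
  · by_cases h : Z u a
    exacts [Or.inr ⟨if_pos h, hZ u a h⟩, Or.inl (if_neg h)]
  · by_cases hu : Z u a
    · simpa only [if_pos hu, if_neg (Z_left u a b v h hu).1] using (ε v).ne_zero.symm
    · simp only [if_neg hu]
      split_ifs with hv
      exacts [(ε u).ne_zero, fun heq => hv (Z_right u a b v h hu (Units.ext heq))]

/-- A path `w v x` hanging from `x`: the end `w` is a leaf and `v` has degree two. -/
structure IsTail (G : SimpleGraph V) (w v x : V) : Prop where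
  adj_end : G.Adj w v
  adj_root : G.Adj v x
  ne : x ≠ w
  degree_end : G.degree w = 1
  degree_mid : G.degree v = 2

theorem IsTail.eq_of_adj (h : IsTail G w v x) (ha : G.Adj v a) (haw : a ≠ w) : a = x :=
  eq_of_adj_of_degree_eq_two h.degree_mid h.adj_end.symm ha h.adj_root haw h.ne

/-- The labels fixed before the remaining edges are labelled greedily: those given by `f` to the
edges at vertices of degree three, and those of the leaf edges of tails. -/
inductive IsForcedLabel (G : SimpleGraph V) (ε : V → ℤˣ) (f : V → V → ℤ) : Sym2 V → ℤ → Prop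
  | cubic {u a : V} (hu : G.degree u = 3) (hua : G.Adj u a) : IsForcedLabel G ε f s(u, a) (f u a)
  | tail {w v x : V} (h : IsTail G w v x) :
    IsForcedLabel G ε f s(w, v) (if G.degree x = 3 then (ε x : ℤ) else 1)

theorem rightUnique_isForcedLabel (ε : V → ℤˣ) (f : V → V → ℤ)
    (hindep : ∀ u v : V, G.degree u = 3 → G.degree v = 3 → ¬ G.Adj u v) :
    Relator.RightUnique (IsForcedLabel G ε f) := by
  intro e k l hk hl
  rcases hk with @⟨u, a, hu, hua⟩ | @⟨w, v, x, h⟩ <;>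
    generalize he : s(_, _) = e at hl <;>
    rcases hl with @⟨u', a', hu', hua'⟩ | @⟨w', v', x', h'⟩ <;>
    rcases Sym2.eq_iff.1 he with ⟨rfl, rfl⟩ | ⟨rfl, rfl⟩
  · rfl
  · exact absurd hua (hindep _ _ hu hu')
  · exact absurd hu (by simp [h'.degree_end])
  · exact absurd hu (by simp [h'.degree_mid])
  · exact absurd hu' (by simp [h.degree_end])
  · exact absurd hu' (by simp [h.degree_mid])
  · rw [h.eq_of_adj h'.adj_root h'.ne]
  · exact absurd h.degree_end (by simp [h'.degree_mid])

theorem not_isForcedLabel_of_degree_eq_two {ε : V → ℤˣ} {f : V → V → ℤ} (hu : G.degree u = 2)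
    (hv : G.degree v = 2) (k : ℤ) : ¬ IsForcedLabel G ε f s(u, v) k := by
  generalize he : s(u, v) = e
  rintro (@⟨x, a, hx, -⟩ | @⟨w, b, x, h⟩)
  · rcases Sym2.eq_iff.1 he with ⟨rfl, rfl⟩ | ⟨rfl, rfl⟩ <;> omega
  · have := h.degree_end
    rcases Sym2.eq_iff.1 he with ⟨rfl, rfl⟩ | ⟨rfl, rfl⟩ <;> omega

/-- A partial labelling fixing the labels of the edges at vertices of degree three and of some
edges near leaves, before the remaining edges are labelled greedily. Every edge at a vertex `u` of
degree three is labelled with the sign `ε u`, except that one edge starting a thread may be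
labelled `0`. -/
structure IsPrelabeling (G : SimpleGraph V) (ε : V → ℤˣ) (p : Sym2 V → ℤ) : Prop where
  mem_Icc : ∀ e, p e ∈ Finset.Icc (-1) 1
  eq_or_zero : ∀ u a, G.degree u = 3 → G.Adj u a →
    p s(u, a) = ε u ∨ p s(u, a) = 0 ∧ ∃ b v, IsThread G u a b v
  card_zero_le : ∀ u, G.degree u = 3 →
    Finset.card {a ∈ G.neighborFinset u | p s(u, a) = 0} ≤ 1
  thread : ∀ u a b v, IsThread G u a b v → p s(u, a) ≠ p s(b, v)
  tail : ∀ w v x, IsTail G w v x → p s(w, v) = if G.degree x = 3 then (ε x : ℤ) else 1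
  eq_zero : ∀ u v, G.degree u = 2 → G.degree v = 2 → p s(u, v) = 0

theorem exists_isPrelabeling
    (hindep : ∀ u v : V, G.degree u = 3 → G.degree v = 3 → ¬ G.Adj u v) :
    ∃ ε p, IsPrelabeling G ε p := by
  obtain ⟨ε, f, f_eq, f_thread, f_card⟩ := exists_thread_labeling G
  obtain ⟨p, hp, hp'⟩ := exists_extension_of_rightUnique (rightUnique_isForcedLabel ε f hindep) 0
  have p_cubic : ∀ u a, G.degree u = 3 → G.Adj u a → p s(u, a) = f u a := fun u a hu hua =>
    hp _ _ (.cubic hu hua)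
  have units_mem : ∀ η : ℤˣ, (η : ℤ) ∈ Finset.Icc (-1) 1 := by decide
  refine ⟨ε, p, fun e => ?_, fun u a hu hua => p_cubic u a hu hua ▸ f_eq u a, fun u hu => ?_,
    fun u a b v h => ?_, fun w v x h => hp _ _ (.tail h),
    fun u v hu hv => hp' _ (not_isForcedLabel_of_degree_eq_two hu hv)⟩
  · by_cases he : ∃ k, IsForcedLabel G ε f e k
    · obtain ⟨k, hk⟩ := he
      rw [hp e k hk]
      rcases hk with @⟨u, a, -, -⟩ | @⟨w, v, x, -⟩
      · rcases f_eq u a with h | ⟨h, -⟩ <;> simp [h, units_mem]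
      · split_ifs <;> simp [units_mem]
    · simp [hp' e (not_exists.1 he)]
  · rw [Finset.filter_congr fun a ha => by rw [p_cubic u a hu (by simpa using ha)]]
    have := f_card u
    omega
  · rw [p_cubic u a h.degree_start h.adj_left, Sym2.eq_swap,
      p_cubic v b h.degree_end h.adj_right.symm]
    exact f_thread u a b v h

end Prelabeling

section Labeling

variable {V : Type*} [Fintype V] {G : SimpleGraph V} {ε : V → ℤˣ} {p s : Sym2 V → ℤ}
  {a b u v w x y : V}

/-- A tail `w v x` continued by two consecutive links, so that `x` and the vertex after `x` have
degree two. -/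
def IsLongTail (G : SimpleGraph V) (w v x : V) : Prop :=
  IsTail G w v x ∧ ∃ y z, IsLink G w v x y ∧ IsLink G v x y z

/-- The pairs that keep the label of a prelabelling. -/
def fixedEdges (G : SimpleGraph V) : Set (Sym2 V) :=
  {e | (∃ u ∈ e, G.degree u = 3) ∨ (conflictGraph G).IsIsolated e ∨
    ∃ w v x, IsLongTail G w v x ∧ e = s(w, v)}

/-- The labels available to a pair that is not fixed. The second edge of a long tail must not get
the sign opposite to the label `1` of the leaf edge. -/
noncomputable def labelList (G : SimpleGraph V) (e : Sym2 V) : Finset ℤ :=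
  if ∃ w v x, IsLongTail G w v x ∧ e = s(v, x) then {0, 1} else Finset.Icc (-1) 1

/-- A labelling from which a locally irregular colouring is obtained by giving every edge `e` the
red multiplicity `s e + 1`. -/
structure IsGoodLabeling (G : SimpleGraph V) (ε : V → ℤˣ) (s : Sym2 V → ℤ) : Prop where
  mem_Icc : ∀ e, s e ∈ Finset.Icc (-1) 1
  link : ∀ x u v y, IsLink G x u v y → s s(x, u) ≠ s s(v, y)
  tail : ∀ w v x, IsTail G w v x → s s(v, x) = 0 ∨ s s(w, v) = s s(v, x)
  eq_or_zero : ∀ u a, G.degree u = 3 → G.Adj u a → s s(u, a) = ε u ∨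
    s s(u, a) = 0 ∧ G.degree a = 2 ∧ ∀ b, G.Adj a b → b ≠ u → s s(a, b) = 0
  card_zero_le : ∀ u, G.degree u = 3 →
    Finset.card {a ∈ G.neighborFinset u | s s(u, a) = 0} ≤ 1

theorem notMem_fixedEdges_of_isLink (h : IsLink G x u v y) (hx : G.degree x = 2) :
    s(x, u) ∉ fixedEdges G := by
  rintro (⟨t, ht, ht3⟩ | hi | ⟨w, v', x', hw, he⟩)
  · rcases Sym2.mem_iff.1 ht with rfl | rfl
    · omega
    · exact absurd ht3 (by simp [h.degree_left])
  · exact hi s(v, y) ⟨x, u, v, y, h, rfl, rfl⟩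
  · have := hw.1.degree_end
    have := h.degree_left
    rcases Sym2.eq_iff.1 he with ⟨rfl, rfl⟩ | ⟨rfl, rfl⟩ <;> omega

theorem IsLink.degree_eq_three_of_mem_fixedEdges (h : IsLink G x u v y)
    (hxu : s(x, u) ∈ fixedEdges G) (hvy : s(v, y) ∈ fixedEdges G) : G.degree x = 3 := by
  have not_isolated : ¬ (conflictGraph G).IsIsolated s(x, u) := fun hi =>
    hi s(v, y) ⟨x, u, v, y, h, rfl, rfl⟩
  rcases hxu with ⟨t, ht, ht3⟩ | hi | ⟨w, v', x', hw, he⟩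
  · rcases Sym2.mem_iff.1 ht with rfl | rfl
    · exact ht3
    · exact absurd ht3 (by simp [h.degree_left])
  · exact absurd hi not_isolated
  · rcases Sym2.eq_iff.1 he with ⟨rfl, rfl⟩ | ⟨rfl, rfl⟩
    · obtain ⟨-, y', z, hl, hl'⟩ := hw
      obtain ⟨rfl, rfl⟩ := h.unique hl
      exact absurd (Sym2.eq_swap ▸ hvy) (notMem_fixedEdges_of_isLink h.symm hl'.degree_right)
    · exact absurd h.degree_left (by simp [hw.1.degree_end])

theorem IsPrelabeling.ne_of_mem_fixedEdges (hp : IsPrelabeling G ε p) {e f : Sym2 V}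
    (he : e ∈ fixedEdges G) (hf : f ∈ fixedEdges G) (hef : (conflictGraph G).Adj e f) :
    p e ≠ p f := by
  obtain ⟨x, u, v, y, h, rfl, rfl⟩ := hef
  have hx := h.degree_eq_three_of_mem_fixedEdges he hf
  have hy := h.symm.degree_eq_three_of_mem_fixedEdges (Sym2.eq_swap ▸ hf) (Sym2.eq_swap ▸ he)
  exact hp.thread x u v y ⟨h, hx, hy⟩

theorem IsTail.linkedEdges_root_eq_empty (h : IsTail G w v x) : linkedEdges G x v = ∅ :=
  linkedEdges_eq_empty fun _ a ha hax => by
    rw [eq_of_adj_of_degree_eq_two h.degree_mid h.adj_root ha h.adj_end.symm hax h.ne.symm,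
      h.degree_end]
    decide

theorem ncard_neighborSet_lt_card_labelList (e : Sym2 V) :
    ((conflictGraph G).neighborSet e).ncard < (labelList G e).card := by
  rw [labelList]
  split_ifs with h
  · obtain ⟨w, v, x, ⟨hw, -⟩, rfl⟩ := h
    exact (ncard_neighborSet_conflictGraph_le_one hw.linkedEdges_root_eq_empty).trans_lt (by decide)
  · exact (ncard_neighborSet_conflictGraph_le_two e).trans_lt (by decide)

theorem isIsolated_mid_of_isThread (h : IsThread G u a b v) :
    (conflictGraph G).IsIsolated s(a, b) := by
  refine isIsolated_conflictGraph (linkedEdges_eq_empty fun _ c hc hca => ?_)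
    (linkedEdges_eq_empty fun _ c hc hcb => ?_)
  · rw [h.eq_of_adj_right hc hca, h.degree_end]; decide
  · rw [h.symm.eq_of_adj_right hc hcb, h.degree_start]; decide

theorem IsTail.mem_fixedEdges (h : IsTail G w v x) (hx : G.degree x ≠ 2) :
    s(w, v) ∈ fixedEdges G := by
  refine Or.inr (Or.inl (isIsolated_conflictGraph (linkedEdges_eq_empty fun _ a ha haw => ?_)
    (linkedEdges_eq_empty fun hw => ?_)))
  · rwa [h.eq_of_adj ha haw]
  · exact absurd hw (by simp [h.degree_end])

theorem IsTail.isLongTail (h : IsTail G w v x) (hx : G.degree x = 2)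
    (hvx : s(v, x) ∉ fixedEdges G) : IsLongTail G w v x := by
  obtain ⟨y, hxy, hyv⟩ := exists_adj_ne_of_degree_eq_two hx h.adj_root.symm
  have hy : G.degree y = 2 := by
    by_contra hy
    refine hvx (Or.inr (Or.inl (isIsolated_conflictGraph
      (linkedEdges_eq_empty fun _ a ha hav => ?_) h.linkedEdges_root_eq_empty)))
    rwa [eq_of_adj_of_degree_eq_two hx h.adj_root.symm ha hxy hav hyv]
  obtain ⟨z, hyz, hzx⟩ := exists_adj_ne_of_degree_eq_two hy hxy.symm
  exact ⟨h, y, z, ⟨h.adj_end, h.adj_root, hxy, h.ne.symm, hyv, h.degree_mid, hx⟩,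
    ⟨h.adj_root, hxy, hyz, hyv.symm, hzx, hx, hy⟩⟩

/-- The labellings in which the fixed edges keep their prelabel and the other edges have labels
from their lists. -/
structure IsCompletion (G : SimpleGraph V) (p s : Sym2 V → ℤ) : Prop where
  eq_of_mem : ∀ e ∈ fixedEdges G, s e = p e
  mem_labelList : ∀ e ∉ fixedEdges G, s e ∈ labelList G e

theorem IsCompletion.tail (hs : IsCompletion G p s) (hp : IsPrelabeling G ε p)
    (hsub : ∀ v : V, G.degree v ≤ 3) (h : IsTail G w v x) :
    s s(v, x) = 0 ∨ s s(w, v) = s s(v, x) := by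
  have hx0 : 0 < G.degree x := (G.degree_pos_iff_exists_adj x).2 ⟨v, h.adj_root.symm⟩
  have hx3 := hsub x
  obtain hx | hx | hx : G.degree x = 3 ∨ G.degree x = 2 ∨ G.degree x = 1 := by omega
  · have hwv : s s(w, v) = ε x := by
      rw [hs.eq_of_mem _ (h.mem_fixedEdges (by omega)), hp.tail w v x h, if_pos hx]
    rw [hwv, Sym2.eq_swap, hs.eq_of_mem _ (Or.inl ⟨x, Sym2.mem_mk_left x v, hx⟩)]
    exact (hp.eq_or_zero x v hx h.adj_root.symm).symm.imp And.left Eq.symm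
  · by_cases hvx : s(v, x) ∈ fixedEdges G
    · exact Or.inl ((hs.eq_of_mem _ hvx).trans (hp.eq_zero v x h.degree_mid hx))
    · have hlong := h.isLongTail hx hvx
      have hwv : s s(w, v) = 1 := by
        rw [hs.eq_of_mem _ (Or.inr (Or.inr ⟨w, v, x, hlong, rfl⟩)), hp.tail w v x h,
          if_neg (by omega)]
      have := hs.mem_labelList _ hvx
      rw [labelList, if_pos ⟨w, v, x, hlong, rfl⟩] at this
      simpa [hwv, eq_comm] using this
  · have h' : IsTail G x v w :=
      ⟨h.adj_root.symm, h.adj_end.symm, h.ne.symm, hx, h.degree_mid⟩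
    rw [Sym2.eq_swap (a := v), hs.eq_of_mem _ (h.mem_fixedEdges (by omega)),
      hs.eq_of_mem _ (h'.mem_fixedEdges (by simp [h.degree_end])), hp.tail w v x h,
      hp.tail x v w h']
    simp [hx, h.degree_end]

theorem exists_isGoodLabeling (hsub : ∀ v : V, G.degree v ≤ 3)
    (hindep : ∀ u v : V, G.degree u = 3 → G.degree v = 3 → ¬ G.Adj u v) :
    ∃ ε s, IsGoodLabeling G ε s := by
  obtain ⟨ε, p, hp⟩ := exists_isPrelabeling hindep
  obtain ⟨c, c_fixed, c_list⟩ := exists_coloring_extending (conflictGraph G)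
    (fun e he f hf => hp.ne_of_mem_fixedEdges he hf)
    fun e _ => ncard_neighborSet_lt_card_labelList e
  have c_cubic : ∀ u a, G.degree u = 3 → c s(u, a) = p s(u, a) := fun u a hu =>
    c_fixed _ (Or.inl ⟨u, Sym2.mem_mk_left u a, hu⟩)
  have hc : IsCompletion G p c := ⟨c_fixed, c_list⟩
  refine ⟨ε, c, fun e => ?_, fun x u v y h => c.valid ⟨x, u, v, y, h, rfl, rfl⟩,
    fun w v x h => hc.tail hp hsub h, fun u a hu hua => ?_, fun u hu => ?_⟩
  · by_cases he : e ∈ fixedEdges G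
    · exact c_fixed e he ▸ hp.mem_Icc e
    · have := c_list e he
      rw [labelList] at this
      split_ifs at this <;> grind
  · rw [c_cubic u a hu]
    refine (hp.eq_or_zero u a hu hua).imp_right fun ⟨h0, b, v, h⟩ => ⟨h0, h.degree_left, ?_⟩
    intro b' hb' hne
    obtain rfl := h.eq_of_adj_left hb' hne
    rw [c_fixed _ (Or.inr (Or.inl (isIsolated_mid_of_isThread h)))]
    exact hp.eq_zero _ _ h.degree_left h.degree_right
  · simpa only [c_cubic u _ hu] using hp.card_zero_le u hu

end Labeling

section Excess

variable {V : Type*} [Fintype V] {G : SimpleGraph V} {ε : V → ℤˣ} {s : Sym2 V → ℤ}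
  {a b u v : V}

theorem sum_incident_edges {M : Type*} [AddCommMonoid M] [DecidableEq V] (f : Sym2 V → M) (x : V) :
    ∑ e ∈ G.edgeFinset.filter (fun e => x ∈ e), f e = ∑ y ∈ G.neighborFinset x, f s(x, y) := by
  refine (Finset.sum_nbij (fun y => s(x, y)) ?_ ?_ ?_ fun _ _ => rfl).symm
  · intro y hy
    simpa using hy
  · exact fun y _ z _ h => Sym2.congr_right.1 h
  · intro e he
    simp only [Finset.coe_filter, SimpleGraph.mem_edgeFinset] at he
    obtain ⟨hadj, y, rfl⟩ := he
    exact ⟨y, by simpa using hadj, rfl⟩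

/-- Half the difference between the red and the blue degree of `x` when every edge `e` has red
multiplicity `s e + 1`. -/
noncomputable def excess (G : SimpleGraph V) (s : Sym2 V → ℤ) (x : V) : ℤ :=
  ∑ y ∈ G.neighborFinset x, s s(x, y)

/-- The red multiplicities encoded by signed labels in `{-1, 0, 1}`. -/
def redMultiplicity (s : Sym2 V → ℤ) (e : Sym2 V) : ℕ := (s e + 1).toNat

theorem redDeg_redMultiplicity [DecidableEq V] (hs : ∀ e, s e ∈ Finset.Icc (-1) 1) (x : V) :
    (redDeg G (redMultiplicity s) x : ℤ) = G.degree x + excess G s x := by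
  have hr : ∀ e, (redMultiplicity s e : ℤ) = 1 + s e := fun e => by
    grind [redMultiplicity]
  rw [redDeg, sum_incident_edges, excess]
  simp [hr, Finset.sum_add_distrib]

theorem blueDeg_redMultiplicity [DecidableEq V] (hs : ∀ e, s e ∈ Finset.Icc (-1) 1) (x : V) :
    (blueDeg G (redMultiplicity s) x : ℤ) = G.degree x - excess G s x := by
  have hr : ∀ e, ((2 - redMultiplicity s e : ℕ) : ℤ) = 1 - s e := fun e => by
    grind [redMultiplicity]
  rw [blueDeg, sum_incident_edges, excess]
  simp [hr, Finset.sum_sub_distrib]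

theorem excess_of_degree_eq_one (hv : G.degree v = 1) (ha : G.Adj v a) :
    excess G s v = s s(v, a) := by
  have : G.neighborFinset v = {a} := by
    ext b
    simpa using ⟨fun hb => eq_of_adj_of_degree_eq_one hv hb ha, fun h => h ▸ ha⟩
  rw [excess, this, Finset.sum_singleton]

theorem excess_of_degree_eq_two (hv : G.degree v = 2) (ha : G.Adj v a) (hb : G.Adj v b)
    (hab : a ≠ b) : excess G s v = s s(v, a) + s s(v, b) := by
  obtain ⟨c, hac, h⟩ := exists_neighborFinset_eq_pair hv ha
  have hc : G.Adj v c := by simp [← SimpleGraph.mem_neighborFinset, h]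
  rw [eq_of_adj_of_degree_eq_two hv ha hb hc hab.symm hac.symm, excess, h, Finset.sum_pair hac]

theorem abs_excess_le (hs : ∀ e, s e ∈ Finset.Icc (-1) 1) (x : V) :
    |excess G s x| ≤ G.degree x := by
  refine (Finset.abs_sum_le_sum_abs _ _).trans ?_
  simpa using Finset.sum_le_card_nsmul (G.neighborFinset x) (fun y => |s s(x, y)|) 1
    fun y _ => abs_le.2 (Finset.mem_Icc.1 (hs _))

namespace IsGoodLabeling

theorem two_le_mul_excess (hs : IsGoodLabeling G ε s) (hv : G.degree v = 3) :
    2 ≤ ε v * excess G s v := by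
  have term : ∀ a ∈ G.neighborFinset v,
      (ε v * s s(v, a) : ℤ) = 1 - if s s(v, a) = 0 then 1 else 0 := by
    intro a ha
    have unit_mul_self : ∀ η : ℤˣ, (η * η : ℤ) = 1 ∧ (η : ℤ) ≠ 0 := by decide
    rcases hs.eq_or_zero v a hv (by simpa using ha) with h | ⟨h, -⟩ <;> simp [h, unit_mul_self]
  have := hs.card_zero_le v hv
  rw [excess, Finset.mul_sum, Finset.sum_congr rfl term, Finset.sum_sub_distrib,
    ← Finset.natCast_card_filter]
  simp only [Finset.sum_const, SimpleGraph.card_neighborFinset_eq_degree, hv]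
  norm_num
  omega

end IsGoodLabeling

/-- The two conditions of local irregularity at the edge `s(u, v)`, in terms of signed labels. -/
def IsSeparated (G : SimpleGraph V) (s : Sym2 V → ℤ) (u v : V) : Prop :=
  (0 ≤ s s(u, v) → G.degree u + excess G s u ≠ G.degree v + excess G s v) ∧
    (s s(u, v) ≤ 0 → G.degree u - excess G s u ≠ G.degree v - excess G s v)

theorem IsSeparated.symm (h : IsSeparated G s u v) : IsSeparated G s v u := by
  rw [IsSeparated, Sym2.eq_swap]
  exact ⟨fun h0 => (h.1 h0).symm, fun h0 => (h.2 h0).symm⟩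

theorem isLIR2_redMultiplicity [DecidableEq V] (hs : ∀ e, s e ∈ Finset.Icc (-1) 1)
    (h : ∀ u v, G.Adj u v → IsSeparated G s u v) : IsLIR2 G (redMultiplicity s) := by
  refine ⟨fun e _ => ?_, fun u v huv => ?_⟩
  · have := hs e
    grind [redMultiplicity]
  · obtain ⟨hred, hblue⟩ := h u v huv
    rw [← redDeg_redMultiplicity hs, ← redDeg_redMultiplicity hs] at hred
    rw [← blueDeg_redMultiplicity hs, ← blueDeg_redMultiplicity hs] at hblue
    refine ⟨fun hr heq => hred ?_ (congrArg _ heq), fun hr heq => hblue ?_ (congrArg _ heq)⟩ <;>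
      grind [redMultiplicity]

namespace IsGoodLabeling

theorem isSeparated_of_degree_eq_one (hs : IsGoodLabeling G ε s) (huv : G.Adj u v)
    (hu : G.degree u = 1) (hv : G.degree v = 2) : IsSeparated G s u v := by
  obtain ⟨x, hvx, hxu⟩ := exists_adj_ne_of_degree_eq_two hv huv.symm
  have tail := hs.tail u v x ⟨huv, hvx, hxu, hu, hv⟩
  rw [IsSeparated, excess_of_degree_eq_one hu huv,
    excess_of_degree_eq_two hv huv.symm hvx hxu.symm, Sym2.eq_swap (a := v), hu, hv]
  push_cast
  omega

theorem isSeparated_of_degree_eq_two (hs : IsGoodLabeling G ε s) (huv : G.Adj u v)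
    (hu : G.degree u = 2) (hv : G.degree v = 2) : IsSeparated G s u v := by
  obtain ⟨x, hux, hxv⟩ := exists_adj_ne_of_degree_eq_two hu huv
  obtain ⟨y, hvy, hyu⟩ := exists_adj_ne_of_degree_eq_two hv huv.symm
  have link := hs.link x u v y ⟨hux.symm, huv, hvy, hxv, hyu, hu, hv⟩
  rw [Sym2.eq_swap] at link
  rw [IsSeparated, excess_of_degree_eq_two hu hux huv hxv,
    excess_of_degree_eq_two hv huv.symm hvy hyu.symm, Sym2.eq_swap (a := v), hu, hv]
  omega

theorem isSeparated_of_degree_eq_three (hs : IsGoodLabeling G ε s) (huv : G.Adj u v)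
    (hu : G.degree u ≤ 2) (hv : G.degree v = 3) : IsSeparated G s u v := by
  have excess_u := abs_le.1 (abs_excess_le (G := G) hs.mem_Icc u)
  have excess_v := hs.two_le_mul_excess hv
  rw [IsSeparated, Sym2.eq_swap, hv]
  rcases hs.eq_or_zero v u hv huv.symm with h | ⟨h, hu2, hzero⟩
  · rw [h]
    rcases Int.units_eq_one_or (ε v) with hε | hε <;>
      · simp only [hε, Units.val_one, Units.val_neg] at excess_v ⊢
        omega
  · obtain ⟨b, hub, hbv⟩ := exists_adj_ne_of_degree_eq_two hu2 huv
    rw [excess_of_degree_eq_two hu2 huv hub hbv.symm, hzero b hub hbv, Sym2.eq_swap (a := u), h,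
      hu2]
    rcases Int.units_eq_one_or (ε v) with hε | hε <;>
      · simp only [hε, Units.val_one, Units.val_neg] at excess_v ⊢
        omega

theorem isSeparated (hs : IsGoodLabeling G ε s) (hsub : ∀ v : V, G.degree v ≤ 3)
    (hindep : ∀ u v : V, G.degree u = 3 → G.degree v = 3 → ¬ G.Adj u v)
    (hleaf : ∀ u v : V, G.degree u = 1 → G.degree v = 1 → ¬ G.Adj u v) (huv : G.Adj u v) :
    IsSeparated G s u v := by
  wlog hle : G.degree u ≤ G.degree v generalizing u v
  · exact (this huv.symm (le_of_not_ge hle)).symm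
  have hu0 : 0 < G.degree u := (G.degree_pos_iff_exists_adj u).2 ⟨v, huv⟩
  have hv3 := hsub v
  have not_both_three : ¬ (G.degree u = 3 ∧ G.degree v = 3) := fun h => hindep u v h.1 h.2 huv
  have not_both_one : ¬ (G.degree u = 1 ∧ G.degree v = 1) := fun h => hleaf u v h.1 h.2 huv
  obtain hv | ⟨hu, hv⟩ | ⟨hu, hv⟩ : G.degree v = 3 ∨ (G.degree u = 1 ∧ G.degree v = 2) ∨
      (G.degree u = 2 ∧ G.degree v = 2) := by omega
  exacts [hs.isSeparated_of_degree_eq_three huv (by omega) hv,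
    hs.isSeparated_of_degree_eq_one huv hu hv, hs.isSeparated_of_degree_eq_two huv hu hv]

end IsGoodLabeling

end Excess

theorem nonempty_iso_top_fin_two_of_adj_of_degree_eq_one {V : Type*} [Fintype V]
    {G : SimpleGraph V} (hconn : G.Connected) {u v : V} (hu : G.degree u = 1)
    (hv : G.degree v = 1) (huv : G.Adj u v) : Nonempty (G ≃g (⊤ : SimpleGraph (Fin 2))) := by
  have eq_or_eq : ∀ x, x = u ∨ x = v := by
    intro x
    obtain ⟨p⟩ := hconn.preconnected x u
    induction p with
    | nil => exact Or.inl rfl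
    | cons hab p ih =>
      rcases ih hu huv with rfl | rfl
      · exact Or.inr (eq_of_adj_of_degree_eq_one hu hab.symm huv)
      · exact Or.inl (eq_of_adj_of_degree_eq_one hv hab.symm huv.symm)
  have card_eq_two : Fintype.card V = 2 := by
    rw [← Finset.card_univ, ← Finset.card_pair huv.ne]
    congr 1
    ext x
    simpa using eq_or_eq x
  have eq_top : G = ⊤ := by
    ext x y
    rcases eq_or_eq x with rfl | rfl <;> rcases eq_or_eq y with rfl | rfl <;>
      simp [huv, huv.symm, huv.ne, huv.ne']
  subst eq_top
  exact ⟨SimpleGraph.Iso.completeGraph (Fintype.equivFinOfCardEq card_eq_two)⟩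

theorem lir_two_mul_subcubic_indep_general {V : Type*} [Fintype V] [DecidableEq V]
    (G : SimpleGraph V) (hsub : ∀ v : V, G.degree v ≤ 3)
    (hindep : ∀ u v : V, G.degree u = 3 → G.degree v = 3 → ¬ G.Adj u v)
    (hleaf : ∀ u v : V, G.degree u = 1 → G.degree v = 1 → ¬ G.Adj u v) : LIRtwoLE2 G := by
  obtain ⟨ε, s, hs⟩ := exists_isGoodLabeling hsub hindep
  exact ⟨redMultiplicity s,
    isLIR2_redMultiplicity hs.mem_Icc fun _ _ => hs.isSeparated hsub hindep hleaf⟩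

/-- If `G` is a connected subcubic simple graph not isomorphic to `K₂` in
which the vertices of degree 3 form an independent set, then `lir(²G) ≤ 2`. -/
theorem lir_two_mul_subcubic_indep {V : Type*} [Fintype V] [DecidableEq V]
    (G : SimpleGraph V) (hconn : G.Connected)
    (hsub : ∀ v : V, G.degree v ≤ 3)
    (hindep : ∀ u v : V, G.degree u = 3 → G.degree v = 3 → ¬ G.Adj u v)
    (hK2 : ¬ Nonempty (G ≃g (⊤ : SimpleGraph (Fin 2)))) :
    LIRtwoLE2 G :=
  lir_two_mul_subcubic_indep_general G hsub hindep fun _ _ hu hv huv =>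
    hK2 (nonempty_iso_top_fin_two_of_adj_of_degree_eq_one hconn hu hv huv)
end
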